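/- Let n and γ be integers with 2 ≤ γ < ⌈n/3⌉, and let G be a minimizer graph of 𝔾_{n,γ}. Then there exists a minimum dominating set D of G such that the minimum of d_G(u,v) over all pairs of distinct vertices u, v ∈ D equals 3, where d_G denotes graph distance. -/

import Mathlib

open SimpleGraph

/-- Adjacency matrix of a simple graph over ℝ. -/
noncomputable def adjMat {V : Type*} (G : SimpleGraph V) : Matrix V V ℝ :=
  Matrix.of fun i j => @ite ℝ (G.Adj i j) (Classical.propDecidable _) 1 0

/-- Spectral radius: the largest eigenvalue (supremum of the real spectrum)
of the adjacency matrix. -/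
noncomputable def specRad {V : Type*} [Fintype V] [DecidableEq V]
    (G : SimpleGraph V) : ℝ :=
  sSup (spectrum ℝ (adjMat G))

/-- `D` is a dominating set of `G`. -/
def IsDomSet {V : Type*} (G : SimpleGraph V) (D : Finset V) : Prop :=
  ∀ v ∉ D, ∃ u ∈ D, G.Adj u v

/-- The domination number of `G`. -/
noncomputable def domNum {V : Type*} [Fintype V] (G : SimpleGraph V) : ℕ :=
  sInf {k | ∃ D : Finset V, IsDomSet G D ∧ D.card = k}

/-!
Extend minimality of the spectral radius to the connected graphs with a dominating set of size at
most `γ`; a minimizer `G` of this larger class is a tree. Call an edge meeting a dominating set `D`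
redundant if `D` still dominates after its deletion. Two vertices of `D` at distance one or two
yield a redundant edge, so if some minimum `D` has none then all its distances are at least three,
and connectedness and domination force one of them to equal three.

If `G` has an edge `ab` on no pendant path, the Perron vector satisfies `x_a² + x_b² ≤ ρ x_a x_b`
there, as Hoffman and Smith observed. Moving a leaf onto `ab`, or successively two or three vertices
from the end of a pendant path, therefore lowers the spectral radius, and a redundant edge would
allow such a move without enlarging `D`.

Otherwise `G` is starlike. A redundant edge at the centre could be rotated to the end of another
leg, which lowers the spectral radius as long as it exceeds two. A redundant edge away from the
centre can be pushed one step towards it when `D` has minimum total distance to the centre.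
-/

open scoped Matrix

section AdjacencyMatrix

variable {V : Type*}

theorem adjMat_eq_adjMatrix (G : SimpleGraph V) [DecidableRel G.Adj] :
    adjMat G = G.adjMatrix ℝ := by
  ext i j
  simp [adjMat, adjMatrix_apply]

theorem isSymm_adjMat (G : SimpleGraph V) : (adjMat G).IsSymm := by
  classical
  exact adjMat_eq_adjMatrix G ▸ G.isSymm_adjMatrix

theorem isHermitian_adjMat (G : SimpleGraph V) : (adjMat G).IsHermitian :=
  (Matrix.conjTranspose_eq_transpose_of_trivial _).trans (isSymm_adjMat G)

variable [Fintype V] {G H : SimpleGraph V} {x y : V → ℝ} {v : V}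

theorem adjMat_mulVec_eq_sum {s : Finset V} (hs : G.neighborSet v = s) :
    (adjMat G *ᵥ x) v = ∑ u ∈ s, x u := by
  classical
  rw [adjMat_eq_adjMatrix, adjMatrix_mulVec_apply]
  congr 1
  ext u
  simpa using Set.ext_iff.1 hs u

theorem adjMat_mulVec_apply (G : SimpleGraph V) (x : V → ℝ) (v : V) :
    (adjMat G *ᵥ x) v = ∑ u ∈ (G.neighborSet v).toFinite.toFinset, x u :=
  adjMat_mulVec_eq_sum (by simp)

theorem sum_le_adjMat_mulVec {s : Finset V} (hx : 0 ≤ x) (hs : ↑s ⊆ G.neighborSet v) :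
    ∑ u ∈ s, x u ≤ (adjMat G *ᵥ x) v := by
  rw [adjMat_mulVec_apply]
  exact Finset.sum_le_sum_of_subset_of_nonneg (by simpa using hs) fun u _ _ ↦ hx u

theorem le_adjMat_mulVec {u : V} (hx : 0 ≤ x) (hvu : G.Adj v u) : x u ≤ (adjMat G *ᵥ x) v := by
  simpa using sum_le_adjMat_mulVec (s := {u}) hx (by simpa using hvu)

theorem adjMat_mulVec_le_ncard_mul {c : ℝ} (hx : ∀ u ∈ G.neighborSet v, x u ≤ c) :
    (adjMat G *ᵥ x) v ≤ (G.neighborSet v).ncard * c := by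
  rw [adjMat_mulVec_apply, Set.ncard_eq_toFinset_card _, ← nsmul_eq_mul]
  exact Finset.sum_le_card_nsmul _ _ _ (by simpa using hx)

theorem adjMat_mulVec_le_sum_of_injOn {s : Finset V} {f : V → V} (hx : 0 ≤ x)
    (hf : Set.MapsTo f (H.neighborSet v) s) (hinj : Set.InjOn f (H.neighborSet v))
    (hy : ∀ u ∈ H.neighborSet v, y u ≤ x (f u)) :
    (adjMat H *ᵥ y) v ≤ ∑ u ∈ s, x u := by
  classical
  rw [adjMat_mulVec_apply]
  calc ∑ u ∈ (H.neighborSet v).toFinite.toFinset, y u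
      ≤ ∑ u ∈ (H.neighborSet v).toFinite.toFinset, x (f u) :=
        Finset.sum_le_sum fun u hu ↦ hy u (by simpa using hu)
    _ = ∑ u ∈ (H.neighborSet v).toFinite.toFinset.image f, x u :=
        (Finset.sum_image (by simpa using hinj)).symm
    _ ≤ ∑ u ∈ s, x u := Finset.sum_le_sum_of_subset_of_nonneg
        (Finset.image_subset_iff.2 fun u hu ↦ hf (by simpa using hu)) fun u _ _ ↦ hx u

theorem pos_of_adjMat_mulVec_eq_smul {r : ℝ} (hG : G.Connected) (hx : 0 ≤ x) (hx0 : x ≠ 0)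
    (hxr : adjMat G *ᵥ x = r • x) (v : V) : 0 < x v := by
  by_contra! hv
  have zero_of_adj {a b : V} (hab : G.Adj a b) (ha : x a = 0) : x b = 0 := by
    refine le_antisymm ?_ (hx b)
    simpa [hxr, ha] using le_adjMat_mulVec hx hab
  refine hx0 (funext fun w ↦ ?_)
  obtain ⟨p⟩ := hG.preconnected v w
  have hv0 : x v = 0 := hv.antisymm (hx v)
  clear hv
  induction p with
  | nil => exact hv0
  | cons hab _ ih => exact ih (zero_of_adj hab hv0)

end AdjacencyMatrix

section SpectralRadius

variable {V : Type*} [Fintype V]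

theorem dotProduct_lt_dotProduct_of_pos {x y z : V → ℝ} (hx : ∀ v, 0 < x v)
    (hyz : y < z) : x ⬝ᵥ y < x ⬝ᵥ z := by
  obtain ⟨hle, w, hw⟩ := Pi.lt_def.1 hyz
  exact Finset.sum_lt_sum (fun v _ ↦ mul_le_mul_of_nonneg_left (hle v) (hx v).le)
    ⟨w, Finset.mem_univ w, mul_lt_mul_of_pos_left hw (hx w)⟩

variable [DecidableEq V] {G : SimpleGraph V} {x y : V → ℝ}

theorem isGreatest_specRad [Nonempty V] (G : SimpleGraph V) :
    IsGreatest (spectrum ℝ (adjMat G)) (specRad G) := by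
  have hfin : (spectrum ℝ (adjMat G)).Finite := (adjMat G).finite_real_spectrum
  have hne : (spectrum ℝ (adjMat G)).Nonempty := by
    rw [(isHermitian_adjMat G).spectrum_real_eq_range_eigenvalues]
    exact Set.range_nonempty _
  exact ⟨hne.csSup_mem hfin, fun _ ↦ le_csSup hfin.bddAbove⟩

theorem posSemidef_specRad_smul_one_sub_adjMat [Nonempty V] (G : SimpleGraph V) :
    (specRad G • (1 : Matrix V V ℝ) - adjMat G).PosSemidef := by
  rw [Matrix.posSemidef_iff_isHermitian_and_spectrum_nonneg]
  refine ⟨((Matrix.isHermitian_one (α := ℝ)).smul (.all _)).sub (isHermitian_adjMat G), ?_⟩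
  rw [← Algebra.algebraMap_eq_smul_one, ← spectrum.singleton_sub_eq, Set.singleton_sub]
  rintro _ ⟨r, hr, rfl⟩
  exact sub_nonneg.2 ((isGreatest_specRad G).2 hr)

theorem smul_one_sub_mulVec (r : ℝ) (A : Matrix V V ℝ) (x : V → ℝ) :
    (r • (1 : Matrix V V ℝ) - A) *ᵥ x = r • x - A *ᵥ x := by
  rw [Matrix.sub_mulVec, Matrix.smul_mulVec, Matrix.one_mulVec]

theorem dotProduct_adjMat_mulVec_le [Nonempty V] (G : SimpleGraph V) (x : V → ℝ) :
    x ⬝ᵥ adjMat G *ᵥ x ≤ specRad G * (x ⬝ᵥ x) := by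
  have h := (posSemidef_specRad_smul_one_sub_adjMat G).dotProduct_mulVec_nonneg x
  rwa [smul_one_sub_mulVec, star_trivial, dotProduct_sub, dotProduct_smul, sub_nonneg,
    smul_eq_mul] at h

theorem adjMat_mulVec_eq_of_le_dotProduct [Nonempty V]
    (h : specRad G * (x ⬝ᵥ x) ≤ x ⬝ᵥ adjMat G *ᵥ x) : adjMat G *ᵥ x = specRad G • x := by
  have h0 := (posSemidef_specRad_smul_one_sub_adjMat G).dotProduct_mulVec_zero_iff x
  rw [smul_one_sub_mulVec, star_trivial, dotProduct_sub, dotProduct_smul, smul_eq_mul,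
    sub_eq_zero, sub_eq_zero] at h0
  exact (h0.1 (h.antisymm (dotProduct_adjMat_mulVec_le G x))).symm

theorem exists_adjMat_mulVec_eq_specRad_smul [Nonempty V] (G : SimpleGraph V) :
    ∃ x ≠ 0, adjMat G *ᵥ x = specRad G • x := by
  have hmem := (isGreatest_specRad G).1
  rw [← Matrix.spectrum_toLin', ← Module.End.hasEigenvalue_iff_mem_spectrum] at hmem
  obtain ⟨x, hx⟩ := hmem.exists_hasEigenvector
  exact ⟨x, hx.2, by simpa using hx.apply_eq_smul⟩

theorem exists_perron_vector (hG : G.Connected) :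
    ∃ x : V → ℝ, (∀ v, 0 < x v) ∧ adjMat G *ᵥ x = specRad G • x := by
  classical
  have := hG.nonempty
  obtain ⟨z, hz0, hz⟩ := exists_adjMat_mulVec_eq_specRad_smul G
  have hle : specRad G * (|z| ⬝ᵥ |z|) ≤ |z| ⬝ᵥ adjMat G *ᵥ |z| :=
    calc specRad G * (|z| ⬝ᵥ |z|) = z ⬝ᵥ adjMat G *ᵥ z := by
          rw [hz, dotProduct_smul, smul_eq_mul]
          simp [dotProduct]
      _ ≤ |z| ⬝ᵥ adjMat G *ᵥ |z| := by
          rw [adjMat_eq_adjMatrix, dotProduct_mulVec_adjMatrix, dotProduct_mulVec_adjMatrix]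
          gcongr with i _ j _
          split_ifs
          · exact (le_abs_self _).trans_eq (abs_mul _ _)
          · rfl
  have heig := adjMat_mulVec_eq_of_le_dotProduct hle
  exact ⟨|z|, pos_of_adjMat_mulVec_eq_smul hG (abs_nonneg z) (by simpa using hz0) heig, heig⟩

theorem exists_pos_dotProduct_adjMat_mulVec (hG : G.Connected) :
    ∃ x : V → ℝ, (∀ v, 0 < x v) ∧ ∀ y, x ⬝ᵥ adjMat G *ᵥ y = specRad G * (x ⬝ᵥ y) := by
  obtain ⟨x, hx, hxG⟩ := exists_perron_vector hG
  refine ⟨x, hx, fun y ↦ ?_⟩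
  rw [Matrix.dotProduct_mulVec, ← Matrix.mulVec_transpose, isSymm_adjMat G, hxG, smul_dotProduct,
    smul_eq_mul]

theorem specRad_lt_of_mulVec_lt {r : ℝ} (hG : G.Connected) (hy : 0 ≤ y)
    (hlt : adjMat G *ᵥ y < r • y) : specRad G < r := by
  obtain ⟨x, hx, hxG⟩ := exists_pos_dotProduct_adjMat_mulVec hG
  have hxy : 0 ≤ x ⬝ᵥ y := dotProduct_nonneg_of_nonneg (fun v ↦ (hx v).le) hy
  refine lt_of_mul_lt_mul_right ?_ hxy
  rw [← hxG, ← smul_eq_mul r, ← dotProduct_smul]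
  exact dotProduct_lt_dotProduct_of_pos hx hlt

theorem lt_specRad_of_lt_mulVec {r : ℝ} (hG : G.Connected) (hy : 0 ≤ y)
    (hlt : r • y < adjMat G *ᵥ y) : r < specRad G := by
  obtain ⟨x, hx, hxG⟩ := exists_pos_dotProduct_adjMat_mulVec hG
  have hxy : 0 ≤ x ⬝ᵥ y := dotProduct_nonneg_of_nonneg (fun v ↦ (hx v).le) hy
  refine lt_of_mul_lt_mul_right ?_ hxy
  rw [← hxG, ← smul_eq_mul r, ← dotProduct_smul]
  exact dotProduct_lt_dotProduct_of_pos hx hlt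

end SpectralRadius

section HoffmanSmith

variable {V : Type*}

/-- `StartsPendantPath G w u`: the edge from `w` to `u` is the first edge of a path ending in a
leaf, all of whose vertices strictly between `w` and the leaf have degree two. -/
inductive StartsPendantPath (G : SimpleGraph V) : V → V → Prop
  | leaf {w u : V} : G.neighborSet u = {w} → StartsPendantPath G w u
  | step {w u v : V} : w ≠ v → G.neighborSet u = {w, v} → StartsPendantPath G u v →
      StartsPendantPath G w u

/-- An edge `ab` is internal if it lies on no pendant path, in either direction. -/
structure IsInternalEdge (G : SimpleGraph V) (a b : V) : Prop where
  adj : G.Adj a b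
  not_startsPendantPath : ¬ StartsPendantPath G a b
  not_startsPendantPath_symm : ¬ StartsPendantPath G b a

theorem StartsPendantPath.adj {G : SimpleGraph V} {w u : V} (h : StartsPendantPath G w u) :
    G.Adj w u := by
  have hw : w ∈ G.neighborSet u := by cases h <;> simp_all
  exact hw.symm

theorem sq_add_sq_le_of_two_mul_le {r p q : ℝ} (hr : 0 < r) (hp : 0 < p) (hpq : p ≤ q)
    (h : 2 * p ≤ r * (r * p - q)) : p ^ 2 + q ^ 2 ≤ r * (p * q) := by
  have hr2 : 2 ≤ r := by
    by_contra! hr2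
    nlinarith [mul_pos (mul_pos (sub_pos.2 hr2) (add_pos hr one_pos)) hp,
      mul_le_mul_of_nonneg_left hpq hr.le]
  have hq : q ≤ (r + 1) * p := by nlinarith
  nlinarith [mul_nonneg (sub_nonneg.2 hpq) (sub_nonneg.2 h),
    mul_nonneg (mul_nonneg (sub_nonneg.2 hr2) hp.le) (sub_nonneg.2 hq)]

variable [Fintype V] {G : SimpleGraph V} {x : V → ℝ} {r : ℝ}

theorem sq_add_sq_le_of_three_neighbors {u w a b : V} (hx : ∀ v, 0 < x v)
    (hxr : adjMat G *ᵥ x = r • x) (hle : x u ≤ x w) (hwa : w ≠ a) (hwb : w ≠ b) (hab : a ≠ b)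
    (hw : G.Adj u w) (ha : G.Adj u a) (hb : G.Adj u b) :
    x u ^ 2 + x w ^ 2 ≤ r * (x u * x w) := by
  classical
  have hx0 : 0 ≤ x := fun v ↦ (hx v).le
  have hsum : x w + x a + x b ≤ r * x u := by
    have := sum_le_adjMat_mulVec (G := G) (v := u) (s := {w, a, b}) hx0
      (by simp [Set.insert_subset_iff, hw, ha, hb])
    simpa [hwa, hwb, hab, hxr, add_assoc] using this
  have hra : x u ≤ r * x a := by simpa [hxr] using le_adjMat_mulVec hx0 ha.symm
  have hrb : x u ≤ r * x b := by simpa [hxr] using le_adjMat_mulVec hx0 hb.symm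
  have hr : 0 < r := pos_of_mul_pos_left ((hx u).trans_le hra) (hx a).le
  exact sq_add_sq_le_of_two_mul_le hr (hx u) hle (by nlinarith)

-- Along the path that leaves `u` away from `w`, a violation of the inequality at a vertex of degree
-- two passes on to the next edge, whose entries are smaller; so take `x u` minimal.
theorem sq_add_sq_le_of_not_startsPendantPath {u w : V} (hx : ∀ v, 0 < x v)
    (hxr : adjMat G *ᵥ x = r • x) (huw : G.Adj u w) (hpend : ¬ StartsPendantPath G w u)
    (hle : x u ≤ x w) : x u ^ 2 + x w ^ 2 ≤ r * (x u * x w) := by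
  classical
  by_contra hcounter
  obtain ⟨u, ⟨w, huw, hpend, hle, hcounter⟩, hmin⟩ := Set.exists_min_image
    {u | ∃ w, G.Adj u w ∧ ¬ StartsPendantPath G w u ∧ x u ≤ x w ∧
      ¬ x u ^ 2 + x w ^ 2 ≤ r * (x u * x w)} x (Set.toFinite _) ⟨u, w, huw, hpend, hle, hcounter⟩
  obtain ⟨v, huv, hvw⟩ : ∃ v, G.Adj u v ∧ v ≠ w := by
    by_contra! h
    exact hpend (.leaf (Set.eq_singleton_iff_unique_mem.2 ⟨huw, h⟩))
  by_cases hdeg : ∃ v', G.Adj u v' ∧ v' ≠ w ∧ v' ≠ v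
  · obtain ⟨v', huv', hv'w, hv'v⟩ := hdeg
    exact hcounter (sq_add_sq_le_of_three_neighbors hx hxr hle hvw.symm hv'w.symm hv'v.symm
      huw huv huv')
  have hnbr : G.neighborSet u = {w, v} := by
    ext v'
    grind [mem_neighborSet]
  have hsum : r * x u = x w + x v := by
    have := adjMat_mulVec_eq_sum (G := G) (x := x) (v := u) (s := {w, v}) (by simpa using hnbr)
    simpa [hvw.symm, hxr] using this
  have hvu : x v < x u := by nlinarith [hx u, hx v, hx w]
  refine (hmin v ⟨u, huv.symm, fun h ↦ hpend (.step hvw.symm hnbr h), hvu.le, ?_⟩).not_gt hvu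
  intro h
  nlinarith

theorem IsInternalEdge.sq_add_sq_le {a b : V} (hab : IsInternalEdge G a b) (hx : ∀ v, 0 < x v)
    (hxr : adjMat G *ᵥ x = r • x) : x a ^ 2 + x b ^ 2 ≤ r * (x a * x b) := by
  rcases le_total (x a) (x b) with hle | hle
  · exact sq_add_sq_le_of_not_startsPendantPath hx hxr hab.adj hab.not_startsPendantPath_symm hle
  · have := sq_add_sq_le_of_not_startsPendantPath hx hxr hab.adj.symm hab.not_startsPendantPath hle
    linarith

end HoffmanSmith

section Subdivision

variable {V : Type*} {G H : SimpleGraph V} {a b z s : V}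

/-- The vertex `z` is detached from its neighbours and used to subdivide the edge `ab`. -/
def subdivide (G : SimpleGraph V) (a b z : V) : SimpleGraph V :=
  (G.deleteEdges {s(a, b)}).deleteIncidenceSet z ⊔ edge a z ⊔ edge z b

theorem subdivide_adj (hza : z ≠ a) (hzb : z ≠ b) {v w : V} :
    (subdivide G a b z).Adj v w ↔ G.Adj v w ∧ s(v, w) ≠ s(a, b) ∧ v ≠ z ∧ w ≠ z ∨
      s(v, w) = s(a, z) ∨ s(v, w) = s(z, b) := by
  simp only [subdivide, sup_adj, deleteIncidenceSet_adj, deleteEdges_adj, edge_adj,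
    Set.mem_singleton_iff, Sym2.eq_iff]
  grind

theorem subdivide_adj_left (hza : z ≠ a) (hzb : z ≠ b) : (subdivide G a b z).Adj a z := by
  simp [subdivide_adj hza hzb]

theorem subdivide_adj_right (hza : z ≠ a) (hzb : z ≠ b) : (subdivide G a b z).Adj z b := by
  simp [subdivide_adj hza hzb]

theorem neighborSet_subdivide_self (hza : z ≠ a) (hzb : z ≠ b) :
    (subdivide G a b z).neighborSet z = {a, b} := by
  ext v
  simp only [mem_neighborSet, subdivide_adj hza hzb, Sym2.eq_iff, Set.mem_insert_iff,
    Set.mem_singleton_iff]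
  grind

theorem neighborSet_subdivide_of_ne {v : V} (hza : z ≠ a) (hzb : z ≠ b) (hvz : v ≠ z)
    (hva : v ≠ a) (hvb : v ≠ b) :
    (subdivide G a b z).neighborSet v = G.neighborSet v \ {z} := by
  ext w
  simp only [mem_neighborSet, subdivide_adj hza hzb, Sym2.eq_iff, Set.mem_sdiff,
    Set.mem_singleton_iff]
  grind

theorem reachable_map {W : Type*} {H : SimpleGraph W} {f : V → W}
    (hf : ∀ v w, G.Adj v w → H.Reachable (f v) (f w)) {v w : V} (h : G.Reachable v w) :
    H.Reachable (f v) (f w) := by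
  obtain ⟨p⟩ := h
  induction p with
  | nil => rfl
  | cons hadj _ ih => exact (hf _ _ hadj).trans ih

theorem ne_of_neighborSet_eq_singleton (hz : G.neighborSet z = {s}) : s ≠ z := by
  rintro rfl
  simpa using hz.ge (Set.mem_singleton s)

theorem connected_subdivide (hG : G.Connected) (hza : z ≠ a) (hzb : z ≠ b)
    (hz : G.neighborSet z = {s}) : (subdivide G a b z).Connected := by
  classical
  have haz := subdivide_adj_left (G := G) hza hzb
  have hzb' := subdivide_adj_right (G := G) hza hzb
  have hsz := ne_of_neighborSet_eq_singleton hz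
  have hleaf {v : V} (h : G.Adj z v) : v = s := hz.le h
  have hadj (v w : V) (h : G.Adj v w) :
      (subdivide G a b z).Reachable (if v = z then s else v) (if w = z then s else w) := by
    by_cases hab : s(v, w) = s(a, b)
    · rcases Sym2.eq_iff.1 hab with ⟨rfl, rfl⟩ | ⟨rfl, rfl⟩
      · simpa [hza.symm, hzb.symm] using haz.reachable.trans hzb'.reachable
      · simpa [hza.symm, hzb.symm] using (haz.reachable.trans hzb'.reachable).symm
    by_cases hv : v = z
    · simp [hv, hleaf (hv ▸ h)]
    by_cases hw : w = z
    · simp [hw, hleaf (hw ▸ h.symm)]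
    simpa [hv, hw] using ((subdivide_adj hza hzb).2 (.inl ⟨h, hab, hv, hw⟩)).reachable
  refine (connected_iff_exists_forall_reachable _).2 ⟨a, fun v ↦ ?_⟩
  rcases eq_or_ne v z with rfl | hv
  · exact haz.reachable
  · simpa [hv, hza.symm] using reachable_map hadj (hG.preconnected a v)

variable [Fintype V] {r : ℝ}

/-- A positive supersolution `y` of `A y ≤ r y`, whose values at the ends of the edge `ab`
satisfy the Hoffman–Smith inequality, together with a set `S` showing that `ab` is a bridge. -/
structure IsBridgeSupersolution (G : SimpleGraph V) (a b : V) (r : ℝ) (S : Set V) (y : V → ℝ) :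
    Prop where
  pos : ∀ v, 0 < y v
  mulVec_le : adjMat G *ᵥ y ≤ r • y
  sq_add_sq_le : y a ^ 2 + y b ^ 2 ≤ r * (y a * y b)
  adj : G.Adj a b
  left_mem : a ∈ S
  right_notMem : b ∉ S
  eq_of_adj : ∀ v ∈ S, ∀ w ∉ S, G.Adj v w → v = a ∧ w = b

open Classical in
/-- The supersolution on `subdivide G a b z` obtained from a supersolution `y` on `G`: the two
sides of the bridge `ab` are rescaled by `y a` and `y b` so that `z` can be given the value of
`b` as seen from `a` and of `a` as seen from `b`. -/
noncomputable def subdivideVector (a b z : V) (S : Set V) (y : V → ℝ) (v : V) : ℝ :=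
  if v = z then y a * y b else (if v ∈ S then y a else y b) * y v

namespace IsBridgeSupersolution

variable {S : Set V} {y : V → ℝ}

open Classical in
theorem adjMat_subdivide_mulVec_le (hy : IsBridgeSupersolution G a b r S y) (hza : z ≠ a)
    (hzb : z ≠ b) {v : V} (hv : v ≠ z) :
    (adjMat (subdivide G a b z) *ᵥ subdivideVector a b z S y) v ≤
      (if v ∈ S then y a else y b) * ∑ u ∈ (G.neighborSet v \ {z}).toFinset, y u := by
  set c := if v ∈ S then y a else y b with hc
  have hc0 : 0 < c := by rw [hc]; split_ifs <;> exact hy.pos _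
  rw [Finset.mul_sum]
  have hcut := hy.eq_of_adj
  have ha := hy.left_mem
  have hb := hy.right_notMem
  refine adjMat_mulVec_le_sum_of_injOn (x := fun u ↦ c * y u)
    (f := fun u ↦ if u = z then if v = a then b else a else u)
    (fun u ↦ (mul_pos hc0 (hy.pos u)).le) ?_ ?_ ?_
  · intro u hu
    simp only [mem_neighborSet, subdivide_adj hza hzb, Sym2.eq_iff] at hu
    have := hy.adj
    have := hy.adj.symm
    simp only [Set.coe_toFinset, Set.mem_sdiff, mem_neighborSet, Set.mem_singleton_iff]
    grind
  · intro u hu u' hu'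
    simp only [mem_neighborSet, subdivide_adj hza hzb, Sym2.eq_iff] at hu hu'
    grind
  · intro u hu
    simp only [mem_neighborSet, subdivide_adj hza hzb, Sym2.eq_iff] at hu
    refine le_of_eq ?_
    have := G.adj_symm (u := v) (v := u)
    simp only [subdivideVector]
    grind

theorem mulVec_subdivide_lt (hy : IsBridgeSupersolution G a b r S y) (hza : z ≠ a) (hzb : z ≠ b)
    (hz : G.neighborSet z = {s}) :
    adjMat (subdivide G a b z) *ᵥ subdivideVector a b z S y <
      r • subdivideVector a b z S y := by
  classical
  have hsz := ne_of_neighborSet_eq_singleton hz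
  have hc (v : V) : 0 < if v ∈ S then y a else y b := by split_ifs <;> exact hy.pos _
  have hrhs {v : V} (hv : v ≠ z) : (r • subdivideVector a b z S y) v =
      (if v ∈ S then y a else y b) * (r • y) v := by
    simp only [Pi.smul_apply, smul_eq_mul, subdivideVector, if_neg hv]
    ring
  have hsum (v : V) : ∑ u ∈ (G.neighborSet v \ {z}).toFinset, y u ≤ (adjMat G *ᵥ y) v :=
    sum_le_adjMat_mulVec (fun u ↦ (hy.pos u).le) (by simp)
  refine Pi.lt_def.2 ⟨fun v ↦ ?_, s, ?_⟩
  · rcases eq_or_ne v z with rfl | hv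
    · rw [adjMat_mulVec_eq_sum (s := {a, b}) (by simpa using neighborSet_subdivide_self hza hzb),
        Finset.sum_pair hy.adj.ne]
      simp [subdivideVector, hy.left_mem, hy.right_notMem, hza.symm, hzb.symm, ← sq,
        hy.sq_add_sq_le]
    · rw [hrhs hv]
      refine (hy.adjMat_subdivide_mulVec_le hza hzb hv).trans ?_
      exact mul_le_mul_of_nonneg_left ((hsum v).trans (hy.mulVec_le v)) (hc v).le
  · have hzs : z ∈ G.neighborSet s := (hz.ge (Set.mem_singleton s) : G.Adj z s).symm
    have hlt : ∑ u ∈ (G.neighborSet s \ {z}).toFinset, y u < (adjMat G *ᵥ y) s := by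
      rw [adjMat_mulVec_eq_sum (s := (G.neighborSet s).toFinset) (by simp)]
      exact Finset.sum_lt_sum_of_subset (by simp) (i := z) (by simpa using hzs) (by simp)
        (hy.pos z) fun u _ _ ↦ (hy.pos u).le
    rw [hrhs hsz]
    refine (hy.adjMat_subdivide_mulVec_le hza hzb hsz).trans_lt ?_
    exact mul_lt_mul_of_pos_left (hlt.trans_le (hy.mulVec_le s)) (hc s)

theorem subdivide (hy : IsBridgeSupersolution G a b r S y) (hza : z ≠ a) (hzb : z ≠ b)
    (hz : G.neighborSet z = {s}) :
    IsBridgeSupersolution (subdivide G a b z) a z r (S \ {z}) (subdivideVector a b z S y) where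
  pos v := by
    have := hy.pos
    unfold subdivideVector
    split_ifs <;> simp [this]
  mulVec_le := (hy.mulVec_subdivide_lt hza hzb hz).le
  sq_add_sq_le := by
    have := mul_le_mul_of_nonneg_left hy.sq_add_sq_le (sq_nonneg (y a))
    simp only [subdivideVector, if_neg hza.symm, if_pos hy.left_mem, if_true]
    linarith
  adj := subdivide_adj_left hza hzb
  left_mem := ⟨hy.left_mem, hza.symm⟩
  right_notMem := by simp
  eq_of_adj v hv w hw h := by
    have := hy.eq_of_adj v hv.1 w
    have := hy.right_notMem
    simp only [subdivide_adj hza hzb, Sym2.eq_iff, Set.mem_sdiff, Set.mem_singleton_iff] at *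
    grind

theorem specRad_subdivide_lt [DecidableEq V] (hy : IsBridgeSupersolution G a b r S y)
    (hG : G.Connected) (hza : z ≠ a) (hzb : z ≠ b) (hz : G.neighborSet z = {s}) :
    specRad (_root_.subdivide G a b z) < r :=
  specRad_lt_of_mulVec_lt (connected_subdivide hG hza hzb hz)
    (fun v ↦ ((hy.subdivide hza hzb hz).pos v).le) (hy.mulVec_subdivide_lt hza hzb hz)

end IsBridgeSupersolution
end Subdivision

section Domination

variable {V : Type*} {G H : SimpleGraph V} {D : Finset V} {u v z s : V}

theorem exists_isDomSet_card_eq_domNum [Fintype V] (G : SimpleGraph V) :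
    ∃ D : Finset V, IsDomSet G D ∧ D.card = domNum G :=
  Nat.sInf_mem (s := {k | ∃ D : Finset V, IsDomSet G D ∧ D.card = k})
    ⟨_, Finset.univ, fun v hv ↦ absurd (Finset.mem_univ v) hv, rfl⟩

theorem IsDomSet.domNum_le [Fintype V] (hD : IsDomSet G D) : domNum G ≤ D.card :=
  Nat.sInf_le ⟨D, hD, rfl⟩

theorem IsDomSet.mono (hGH : G ≤ H) (hD : IsDomSet G D) : IsDomSet H D := fun v hv ↦
  let ⟨u, hu, huv⟩ := hD v hv
  ⟨u, hu, hGH huv⟩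

theorem isDomSet_deleteEdges_iff :
    IsDomSet (G.deleteEdges {s(u, v)}) D ↔ ∀ w ∉ D, ∃ d ∈ D, G.Adj d w ∧ s(d, w) ≠ s(u, v) := by
  simp [IsDomSet, deleteEdges_adj]

theorem IsDomSet.deleteEdges_of_mem_iff_mem (hD : IsDomSet G D) (huv : u ∈ D ↔ v ∈ D) :
    IsDomSet (G.deleteEdges {s(u, v)}) D := by
  refine isDomSet_deleteEdges_iff.2 fun w hw ↦ ?_
  obtain ⟨d, hd, hdw⟩ := hD w hw
  refine ⟨d, hd, hdw, fun h ↦ ?_⟩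
  rcases Sym2.eq_iff.1 h with ⟨rfl, rfl⟩ | ⟨rfl, rfl⟩ <;> simp_all

theorem IsDomSet.deleteEdges_of_adj {d : V} (hD : IsDomSet G D) (hu : u ∈ D) (hd : d ∈ D)
    (hdu : d ≠ u) (hdv : G.Adj d v) : IsDomSet (G.deleteEdges {s(u, v)}) D := by
  refine isDomSet_deleteEdges_iff.2 fun w hw ↦ ?_
  rcases eq_or_ne w v with rfl | hwv
  · exact ⟨d, hd, hdv, by simp [hdu, hdv.ne]⟩
  obtain ⟨e, he, hew⟩ := hD w hw
  refine ⟨e, he, hew, fun h ↦ ?_⟩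
  rcases Sym2.eq_iff.1 h with ⟨-, rfl⟩ | ⟨-, rfl⟩
  exacts [hwv rfl, hw hu]

theorem eq_univ_of_forall_neighborSet_subset {S : Set V} (hG : G.Connected) (hS : S.Nonempty)
    (h : ∀ v ∈ S, G.neighborSet v ⊆ S) : S = Set.univ := by
  obtain ⟨v, hv⟩ := hS
  refine Set.eq_univ_of_forall fun w ↦ ?_
  obtain ⟨p⟩ := hG.preconnected v w
  induction p with
  | nil => exact hv
  | cons hadj _ ih => exact ih (h _ hv hadj)

theorem neighborSet_ne_singleton_of_leaf [Fintype V] (hG : G.Connected)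
    (hcard : 2 < Fintype.card V) (hz : G.neighborSet z = {s}) (t : V) :
    G.neighborSet s ≠ {t} := by
  intro hs
  have hzs : z ∈ G.neighborSet s := (hz.ge rfl : G.Adj z s).symm
  obtain rfl : z = t := by simpa [hs] using hzs
  have huniv : ({z, s} : Set V) = Set.univ :=
    eq_univ_of_forall_neighborSet_subset hG ⟨z, by simp⟩ (by simp [hz, hs])
  have := Set.ncard_insert_le z {s}
  rw [huniv, Set.ncard_univ, Nat.card_eq_fintype_card, Set.ncard_singleton] at this
  omega

theorem IsDomSet.exists_forall_mem_neighborSet_ne_singleton [Fintype V] (hG : G.Connected)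
    (hcard : 2 < Fintype.card V) (hD : IsDomSet G D) :
    ∃ D' : Finset V, IsDomSet G D' ∧ D'.card ≤ D.card ∧
      ∀ z ∈ D', ∀ s, G.neighborSet z ≠ {s} := by
  classical
  have hsupport (z : V) : ∃ t, G.neighborSet z = {t} ∨ (∀ s, G.neighborSet z ≠ {s}) ∧ t = z := by
    by_cases h : ∃ t, G.neighborSet z = {t}
    · exact h.imp fun _ ↦ .inl
    · exact ⟨z, .inr ⟨not_exists.1 h, rfl⟩⟩
  choose f hf using hsupport
  refine ⟨D.image f, fun v hv ↦ ?_, Finset.card_image_le, fun z hz s hzs ↦ ?_⟩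
  · by_cases hvD : v ∈ D
    · have hfv : f v ∈ D.image f := Finset.mem_image_of_mem f hvD
      rcases hf v with h | h
      · exact ⟨f v, hfv, (h.ge rfl : G.Adj v (f v)).symm⟩
      · exact absurd (h.2 ▸ hfv) hv
    · obtain ⟨u, hu, huv⟩ := hD v hvD
      have hfu : f u ∈ D.image f := Finset.mem_image_of_mem f hu
      rcases hf u with h | h
      · exact absurd ((h.le huv : v = f u) ▸ hfu) hv
      · exact ⟨u, h.2 ▸ hfu, huv⟩
  · obtain ⟨u, -, rfl⟩ := Finset.mem_image.1 hz
    rcases hf u with h | h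
    · exact neighborSet_ne_singleton_of_leaf hG hcard h s hzs
    · exact h.1 s (h.2 ▸ hzs)

theorem IsDomSet.exists_three_le_ncard_neighborSet [Fintype V] (hD : IsDomSet G D)
    (hcard : 3 * D.card < Fintype.card V) : ∃ u ∈ D, 3 ≤ (G.neighborSet u).ncard := by
  classical
  by_contra! hdeg
  have hcover : Finset.univ ⊆ D.biUnion fun u ↦ insert u (G.neighborSet u).toFinset := by
    intro v _
    by_cases hv : v ∈ D
    · exact Finset.mem_biUnion.2 ⟨v, hv, by simp⟩
    · obtain ⟨u, hu, huv⟩ := hD v hv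
      exact Finset.mem_biUnion.2 ⟨u, hu, by simp [huv]⟩
  have hclosed : ∀ u ∈ D, (insert u (G.neighborSet u).toFinset).card ≤ 3 := fun u hu ↦ by
    have := hdeg u hu
    rw [Set.ncard_eq_toFinset_card'] at this
    exact (Finset.card_insert_le _ _).trans this
  have := (Finset.card_le_card hcover).trans (Finset.card_biUnion_le_card_mul _ _ _ hclosed)
  rw [Finset.card_univ] at this
  omega

end Domination

section DominationOfSubdivisions

variable {V : Type*} {G H : SimpleGraph V} {P D : Finset V} {a b z q q₁ q₂ q₃ : V}

/-- `D \ P` is a dominating set of the graph `G - P`. -/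
def DominatesOff (G : SimpleGraph V) (P D : Finset V) : Prop :=
  ∀ v ∉ P, v ∉ D → ∃ u ∈ D, u ∉ P ∧ G.Adj u v

theorem subdivide_adj_of_adj {v w : V} (h : G.Adj v w) (hvw : s(v, w) ≠ s(a, b)) (hv : v ≠ z)
    (hw : w ≠ z) : (subdivide G a b z).Adj v w := by
  simp [subdivide, deleteIncidenceSet_adj, h, hvw, hv, hw]

variable [DecidableEq V]

theorem DominatesOff.isDomSet_insert (hD : DominatesOff G P D)
    (hH : ∀ v ∉ P, ∀ w ∉ P, G.Adj v w → s(v, w) ≠ s(a, b) → H.Adj v w)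
    (ha : b ∈ D → a ∈ D ∨ H.Adj q a) (hb : a ∈ D → b ∈ D ∨ H.Adj q b)
    (hP : ∀ v ∈ P, v = q ∨ ∃ u ∈ insert q D, H.Adj u v) : IsDomSet H (insert q D) := by
  intro v hv
  obtain ⟨hvq, hvD⟩ : v ≠ q ∧ v ∉ D := by simpa using hv
  by_cases hvP : v ∈ P
  · exact (hP v hvP).resolve_left hvq
  obtain ⟨u, huD, huP, huv⟩ := hD v hvP hvD
  by_cases hab : s(u, v) = s(a, b)
  · refine ⟨q, Finset.mem_insert_self q D, ?_⟩
    rcases Sym2.eq_iff.1 hab with ⟨rfl, rfl⟩ | ⟨rfl, rfl⟩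
    exacts [(hb huD).resolve_left hvD, (ha huD).resolve_left hvD]
  · exact ⟨u, Finset.mem_insert_of_mem huD, hH u huP v hvP huv hab⟩

theorem DominatesOff.isDomSet_subdivide (hD : DominatesOff G {z} D) (hza : z ≠ a) (hzb : z ≠ b) :
    IsDomSet (subdivide G a b z) (insert z D) := by
  refine hD.isDomSet_insert (a := a) (b := b) (fun v hv w hw h hab ↦ ?_) (fun _ ↦ .inr ?_)
    (fun _ ↦ .inr ?_) (by simp)
  · exact subdivide_adj_of_adj h hab (by simpa using hv) (by simpa using hw)
  · exact (subdivide_adj_left hza hzb).symm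
  · exact subdivide_adj_right hza hzb

theorem DominatesOff.exists_isDomSet_subdivide_twice (hD : DominatesOff G {q₁, q₂} D)
    (h₁₂ : q₁ ≠ q₂) (h₁a : q₁ ≠ a) (h₁b : q₁ ≠ b) (h₂a : q₂ ≠ a) (h₂b : q₂ ≠ b) (hab : a ≠ b) :
    ∃ q, IsDomSet (subdivide (subdivide G a b q₂) a q₂ q₁) (insert q D) := by
  set H := subdivide (subdivide G a b q₂) a q₂ q₁
  have adj_of_adj {v w : V} (hv : v ∉ ({q₁, q₂} : Finset V)) (hw : w ∉ ({q₁, q₂} : Finset V))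
      (h : G.Adj v w) (hvw : s(v, w) ≠ s(a, b)) : H.Adj v w := by
    simp only [Finset.mem_insert, Finset.mem_singleton, not_or] at hv hw
    exact subdivide_adj_of_adj (subdivide_adj_of_adj h hvw hv.2 hw.2)
      (by simp [hv.2, hw.2]) hv.1 hw.1
  have ha₁ : H.Adj a q₁ := subdivide_adj_left h₁a h₁₂
  have h₁₂' : H.Adj q₁ q₂ := subdivide_adj_right h₁a h₁₂
  have h₂b' : H.Adj q₂ b :=
    subdivide_adj_of_adj (subdivide_adj_right h₂a h₂b) (by simp [hab.symm, h₂b.symm])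
      h₁₂.symm h₁b.symm
  by_cases hbD : b ∈ D
  · refine ⟨q₁, hD.isDomSet_insert (a := a) (b := b) (fun v hv w hw ↦ adj_of_adj hv hw)
      (fun _ ↦ .inr ha₁.symm) (fun _ ↦ .inl hbD) ?_⟩
    simp [h₁₂']
  · refine ⟨q₂, hD.isDomSet_insert (a := a) (b := b) (fun v hv w hw ↦ adj_of_adj hv hw)
      (fun h ↦ absurd h hbD) (fun _ ↦ .inr h₂b') ?_⟩
    simp [h₁₂'.symm]

theorem DominatesOff.exists_isDomSet_subdivide_thrice (hD : DominatesOff G {q₁, q₂, q₃} D)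
    (h₁₂ : q₁ ≠ q₂) (h₁₃ : q₁ ≠ q₃) (h₂₃ : q₂ ≠ q₃) (h₁a : q₁ ≠ a) (h₁b : q₁ ≠ b) (h₂a : q₂ ≠ a)
    (h₂b : q₂ ≠ b) (h₃a : q₃ ≠ a) (h₃b : q₃ ≠ b) (hab : a ≠ b) :
    ∃ q, IsDomSet (subdivide (subdivide (subdivide G a b q₃) a q₃ q₂) a q₂ q₁) (insert q D) := by
  set H := subdivide (subdivide (subdivide G a b q₃) a q₃ q₂) a q₂ q₁
  have adj_of_adj {v w : V} (hv : v ∉ ({q₁, q₂, q₃} : Finset V))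
      (hw : w ∉ ({q₁, q₂, q₃} : Finset V)) (h : G.Adj v w) (hvw : s(v, w) ≠ s(a, b)) :
      H.Adj v w := by
    simp only [Finset.mem_insert, Finset.mem_singleton, not_or] at hv hw
    exact subdivide_adj_of_adj (subdivide_adj_of_adj (subdivide_adj_of_adj h hvw hv.2.2 hw.2.2)
      (by simp [hv.2.2, hw.2.2]) hv.2.1 hw.2.1) (by simp [hv.2.1, hw.2.1]) hv.1 hw.1
  have ha₁ : H.Adj a q₁ := subdivide_adj_left h₁a h₁₂
  have h₁₂' : H.Adj q₁ q₂ := subdivide_adj_right h₁a h₁₂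
  have h₂₃' : H.Adj q₂ q₃ :=
    subdivide_adj_of_adj (subdivide_adj_right h₂a h₂₃) (by simp [h₃a, h₂₃.symm])
      h₁₂.symm h₁₃.symm
  have h₃b' : H.Adj q₃ b :=
    subdivide_adj_of_adj (subdivide_adj_of_adj (subdivide_adj_right h₃a h₃b)
      (by simp [hab.symm, h₃b.symm]) h₂₃.symm h₂b.symm)
      (by simp [h₃a, h₂₃.symm]) h₁₃.symm h₁b.symm
  by_cases hbD : b ∈ D
  · refine ⟨q₁, hD.isDomSet_insert (a := a) (b := b) (fun v hv w hw ↦ adj_of_adj hv hw)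
      (fun _ ↦ .inr ha₁.symm) (fun _ ↦ .inl hbD) ?_⟩
    simp only [Finset.mem_insert, Finset.mem_singleton]
    rintro v (rfl | rfl | rfl)
    exacts [.inl rfl, .inr ⟨q₁, .inl rfl, h₁₂'⟩, .inr ⟨b, .inr hbD, h₃b'.symm⟩]
  by_cases haD : a ∈ D
  · refine ⟨q₃, hD.isDomSet_insert (a := a) (b := b) (fun v hv w hw ↦ adj_of_adj hv hw)
      (fun h ↦ absurd h hbD) (fun _ ↦ .inr h₃b') ?_⟩
    simp only [Finset.mem_insert, Finset.mem_singleton]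
    rintro v (rfl | rfl | rfl)
    exacts [.inr ⟨a, .inr haD, ha₁⟩, .inr ⟨q₃, .inl rfl, h₂₃'.symm⟩, .inl rfl]
  · refine ⟨q₂, hD.isDomSet_insert (a := a) (b := b) (fun v hv w hw ↦ adj_of_adj hv hw)
      (fun h ↦ absurd h hbD) (fun h ↦ absurd h haD) ?_⟩
    simp [h₁₂'.symm, h₂₃']

end DominationOfSubdivisions

section Minimizers

variable {V : Type*} {G H : SimpleGraph V} {D : Finset V} {γ : ℕ} {a b u v : V}

theorem exists_neighborSet_eq_singleton [Finite V] [Nontrivial V] (hG : G.IsTree) :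
    ∃ z s, G.neighborSet z = {s} := by
  classical
  have := Fintype.ofFinite V
  obtain ⟨z, hz⟩ := hG.exists_vert_degree_one_of_nontrivial
  obtain ⟨s, hs, hs'⟩ := degree_eq_one_iff_existsUnique_adj.1 hz
  exact ⟨z, s, Set.eq_singleton_iff_unique_mem.2 ⟨hs, hs'⟩⟩

/-- The dominating set `D` meets the edge `uw`, but does not need it in order to dominate `G`. -/
structure IsRedundantEdge (G : SimpleGraph V) (D : Finset V) (u w : V) : Prop where
  adj : G.Adj u w
  mem_or_mem : u ∈ D ∨ w ∈ D
  isDomSet : IsDomSet (G.deleteEdges {s(u, w)}) D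

theorem IsRedundantEdge.symm {w : V} (h : IsRedundantEdge G D u w) : IsRedundantEdge G D w u :=
  ⟨h.adj.symm, h.mem_or_mem.symm, Sym2.eq_swap (a := u) ▸ h.isDomSet⟩

variable [Fintype V]

theorem exists_isBridgeSupersolution [DecidableEq V] (hG : G.Connected)
    (hab : IsInternalEdge G a b) (hbridge : G.IsBridge s(a, b)) :
    ∃ S y, IsBridgeSupersolution G a b (specRad G) S y := by
  obtain ⟨x, hx, hxG⟩ := exists_perron_vector hG
  rw [isBridge_iff] at hbridge
  refine ⟨{v | (G.deleteEdges {s(a, b)}).Reachable a v}, x, hx, hxG.le,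
    hab.sq_add_sq_le hx hxG, hab.adj, .refl _, hbridge, fun v hv w hw hvw ↦ ?_⟩
  have hcut : s(v, w) = s(a, b) := by
    by_contra h
    exact hw (hv.trans (Adj.reachable (deleteEdges_adj.2 ⟨hvw, h⟩)))
  rcases Sym2.eq_iff.1 hcut with h | ⟨rfl, rfl⟩
  exacts [h, absurd hv hbridge]

theorem specRad_lt_specRad [DecidableEq V] (hH : H.Connected) (hHG : H < G) :
    specRad H < specRad G := by
  classical
  obtain ⟨x, hx, hxG⟩ := exists_perron_vector (hH.mono hHG.le)
  have hle {v : V} {s : Finset V} (hs : H.neighborSet v ⊆ s) :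
      (adjMat H *ᵥ x) v ≤ ∑ u ∈ s, x u :=
    adjMat_mulVec_le_sum_of_injOn (f := id) (fun u ↦ (hx u).le) hs (Set.injOn_id _)
      fun _ _ ↦ le_rfl
  have hsum (v : V) : (adjMat G *ᵥ x) v = ∑ u ∈ (G.neighborSet v).toFinset, x u :=
    adjMat_mulVec_eq_sum (by simp)
  obtain ⟨v, w, hvw, hvw'⟩ : ∃ v w, G.Adj v w ∧ ¬ H.Adj v w := by
    by_contra! h
    exact hHG.not_ge fun v w ↦ h v w
  refine specRad_lt_of_mulVec_lt hH (fun v ↦ (hx v).le) (hxG ▸ Pi.lt_def.2 ⟨fun v ↦ ?_, v, ?_⟩)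
  · rw [hsum]
    exact hle fun u hu ↦ by simpa using hHG.le hu
  · rw [hsum]
    refine (hle (s := (G.neighborSet v).toFinset.erase w) fun u hu ↦ ?_).trans_lt
      (Finset.sum_erase_lt_of_pos (by simpa using hvw) (hx w))
    have : u ≠ w := by
      rintro rfl
      exact hvw' hu
    simpa [this] using hHG.le hu

/-- `G` has minimum spectral radius among the connected graphs on `V` having a dominating set
with at most (rather than exactly) `γ` vertices, a condition that is easier to preserve. -/
structure IsDominationMinimizer [DecidableEq V] (G : SimpleGraph V) (γ : ℕ) : Prop where
  connected : G.Connected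
  exists_isDomSet : ∃ D : Finset V, IsDomSet G D ∧ D.card ≤ γ
  specRad_le : ∀ H : SimpleGraph V, H.Connected → ∀ D : Finset V, IsDomSet H D → D.card ≤ γ →
    specRad G ≤ specRad H

namespace IsDominationMinimizer

variable [DecidableEq V]

theorem isBridge (hG : IsDominationMinimizer G γ) (huv : G.Adj u v)
    (hD : IsDomSet (G.deleteEdges {s(u, v)}) D) (hDγ : D.card ≤ γ) : G.IsBridge s(u, v) := by
  by_contra hbridge
  have hconn := hG.connected.connected_delete_edge_of_not_isBridge hbridge
  have hlt : G.deleteEdges {s(u, v)} < G :=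
    lt_of_le_not_ge (deleteEdges_le _) fun h ↦ by simpa using h huv
  exact (hG.specRad_le _ hconn D hD hDγ).not_gt (specRad_lt_specRad hconn hlt)

theorem not_isDomSet_deleteEdges_of_isCycle (hG : IsDominationMinimizer G γ) (hDγ : D.card ≤ γ)
    {c : G.Walk v v} (hc : c.IsCycle) {u w : V} (huw : s(u, w) ∈ c.edges) :
    ¬ IsDomSet (G.deleteEdges {s(u, w)}) D := fun hD ↦
  (hG.isBridge (c.adj_of_mem_edges huw) hD hDγ).notMem_edges_of_isCycle hc huw

theorem mem_of_isCycle (hG : IsDominationMinimizer G γ) (hD : IsDomSet G D) (hDγ : D.card ≤ γ)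
    {c : G.Walk v v} (hc : c.IsCycle) : v ∈ D := by
  by_contra hv
  have hsnd : s(c.snd, v) ∈ c.edges := Sym2.eq_swap ▸ c.mk_start_snd_mem_edges hc.not_nil
  have hpen : s(c.penultimate, v) ∈ c.edges := c.mk_penultimate_end_mem_edges hc.not_nil
  have hmem {u : V} (hu : s(u, v) ∈ c.edges) : u ∈ D := by
    by_contra huD
    exact hG.not_isDomSet_deleteEdges_of_isCycle hDγ hc hu
      (hD.deleteEdges_of_mem_iff_mem (by simp [huD, hv]))
  exact hG.not_isDomSet_deleteEdges_of_isCycle hDγ hc hsnd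
    (hD.deleteEdges_of_adj (hmem hsnd) (hmem hpen) hc.snd_ne_penultimate.symm
      (c.adj_of_mem_edges hpen))

theorem isTree (hG : IsDominationMinimizer G γ) : G.IsTree := by
  obtain ⟨D, hD, hDγ⟩ := hG.exists_isDomSet
  refine ⟨hG.connected, fun v c hc ↦ ?_⟩
  have hsnd := c.mk_start_snd_mem_edges hc.not_nil
  have hsnd' := hc.rotate (c.snd_mem_support_of_mem_edges hsnd)
  refine hG.not_isDomSet_deleteEdges_of_isCycle hDγ hc hsnd (hD.deleteEdges_of_mem_iff_mem ?_)
  exact iff_of_true (hG.mem_of_isCycle hD hDγ hc) (hG.mem_of_isCycle hD hDγ hsnd')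

end IsDominationMinimizer
end Minimizers

section InternalEdges

variable {V : Type*} {G : SimpleGraph V} {D : Finset V} {a b u w z s q₀ q₁ q₂ q₃ : V}

theorem IsInternalEdge.symm (hab : IsInternalEdge G a b) : IsInternalEdge G b a :=
  ⟨hab.adj.symm, hab.not_startsPendantPath_symm, hab.not_startsPendantPath⟩

theorem StartsPendantPath.ne_left (h : StartsPendantPath G w u) (hab : IsInternalEdge G a b) :
    u ≠ a := by
  rintro rfl
  have hb : b ∈ G.neighborSet u := hab.adj
  rcases h with h | ⟨hwv, h, hv⟩
  · obtain rfl : b = w := h.le hb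
    exact hab.not_startsPendantPath_symm (.leaf h)
  · rcases h.le hb with rfl | rfl
    exacts [hab.not_startsPendantPath_symm (.step hwv h hv), hab.not_startsPendantPath hv]

theorem StartsPendantPath.ne_right (h : StartsPendantPath G w u) (hab : IsInternalEdge G a b) :
    u ≠ b :=
  h.ne_left hab.symm

theorem StartsPendantPath.leaf_or_pair_or_triple (h : StartsPendantPath G w u) :
    G.neighborSet u = {w} ∨
    (∃ c, w ≠ c ∧ G.neighborSet u = {w, c} ∧ G.neighborSet c = {u}) ∨
    ∃ q₀ q₁ q₂ q₃, q₀ ≠ q₂ ∧ q₁ ≠ q₃ ∧ G.neighborSet q₁ = {q₀, q₂} ∧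
      G.neighborSet q₂ = {q₁, q₃} ∧ G.neighborSet q₃ = {q₂} := by
  induction h with
  | leaf h => exact .inl h
  | @step w u v hwv h _ ih =>
    rcases ih with hv | ⟨c, huc, hv, hc⟩ | ih
    · exact .inr (.inl ⟨v, hwv, h, hv⟩)
    · exact .inr (.inr ⟨w, u, v, c, hwv, huc, h, hv, hc⟩)
    · exact .inr (.inr ih)

theorem IsDomSet.mem_of_leaf (hD : IsDomSet G D) (hz : G.neighborSet z = {s}) (hzD : z ∉ D) :
    s ∈ D := by
  obtain ⟨d, hd, hdz⟩ := hD z hzD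
  rwa [← (hz.le hdz.symm : d = s)]

theorem IsRedundantEdge.isDomSet_subdivide (h : IsRedundantEdge G D u w) (hzu : z ≠ u)
    (hzw : z ≠ w) (hzD : z ∉ D) : IsDomSet (subdivide G u w z) D := by
  intro v hv
  rcases eq_or_ne v z with rfl | hvz
  · rcases h.mem_or_mem with hu | hw
    exacts [⟨u, hu, subdivide_adj_left hzu hzw⟩, ⟨w, hw, (subdivide_adj_right hzu hzw).symm⟩]
  · obtain ⟨d, hd, hdv, hne⟩ := isDomSet_deleteEdges_iff.1 h.isDomSet v hv
    exact ⟨d, hd, subdivide_adj_of_adj hdv hne (ne_of_mem_of_not_mem hd hzD) hvz⟩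

theorem IsRedundantEdge.exists_adj_of_notMem {v : V} (h : IsRedundantEdge G D u w)
    (hu : G.neighborSet u = {w, z}) (hvD : v ∉ D) (hvz : v ≠ z) :
    ∃ d ∈ D, d ≠ u ∧ G.Adj d v := by
  obtain ⟨d, hd, hdv, hne⟩ := isDomSet_deleteEdges_iff.1 h.isDomSet v hvD
  refine ⟨d, hd, ?_, hdv⟩
  rintro rfl
  rcases hu.le hdv with rfl | rfl
  exacts [hne rfl, hvz rfl]

theorem IsRedundantEdge.dominatesOff_erase [DecidableEq V] (h : IsRedundantEdge G D u w)
    (hu : G.neighborSet u = {w, z}) (hzD : z ∉ D) : DominatesOff G {u, z} (D.erase u) := by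
  intro v hv hvD
  simp only [Finset.mem_insert, Finset.mem_singleton, not_or, Finset.mem_erase] at *
  obtain ⟨d, hd, hdu, hdv⟩ := h.exists_adj_of_notMem hu (by tauto) hv.2
  exact ⟨d, ⟨hdu, hd⟩, ⟨hdu, ne_of_mem_of_not_mem hd hzD⟩, hdv⟩

variable [Fintype V] [DecidableEq V] {γ : ℕ}

namespace IsDominationMinimizer

theorem exists_isBridgeSupersolution (hG : IsDominationMinimizer G γ)
    (hab : IsInternalEdge G a b) : ∃ S y, IsBridgeSupersolution G a b (specRad G) S y :=
  _root_.exists_isBridgeSupersolution hG.connected hab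
    (isAcyclic_iff_forall_adj_isBridge.1 hG.isTree.isAcyclic hab.adj)

theorem not_isDomSet_subdivide (hG : IsDominationMinimizer G γ) (hab : IsInternalEdge G a b)
    (hz : G.neighborSet z = {s}) (hDγ : D.card ≤ γ) : ¬ IsDomSet (subdivide G a b z) D := by
  intro hD
  have hza := (StartsPendantPath.leaf hz).ne_left hab
  have hzb := (StartsPendantPath.leaf hz).ne_right hab
  obtain ⟨S, y, hy⟩ := hG.exists_isBridgeSupersolution hab
  exact (hG.specRad_le _ (connected_subdivide hG.connected hza hzb hz) D hD hDγ).not_gt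
    (hy.specRad_subdivide_lt hG.connected hza hzb hz)

theorem not_dominatesOff_leaf (hG : IsDominationMinimizer G γ) (hab : IsInternalEdge G a b)
    (hz : G.neighborSet z = {s}) (hDγ : D.card < γ) : ¬ DominatesOff G {z} D := fun hD ↦
  hG.not_isDomSet_subdivide hab hz ((Finset.card_insert_le z D).trans hDγ)
    (hD.isDomSet_subdivide ((StartsPendantPath.leaf hz).ne_left hab)
      ((StartsPendantPath.leaf hz).ne_right hab))

theorem not_dominatesOff_pair (hG : IsDominationMinimizer G γ) (hab : IsInternalEdge G a b)
    (h₀₂ : q₀ ≠ q₂) (h₁ : G.neighborSet q₁ = {q₀, q₂}) (h₂ : G.neighborSet q₂ = {q₁})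
    (hDγ : D.card < γ) : ¬ DominatesOff G {q₁, q₂} D := by
  intro hD
  have path₂ : StartsPendantPath G q₁ q₂ := .leaf h₂
  have path₁ : StartsPendantPath G q₀ q₁ := .step h₀₂ h₁ path₂
  have h₁a := path₁.ne_left hab
  have h₁b := path₁.ne_right hab
  have h₂a := path₂.ne_left hab
  have h₂b := path₂.ne_right hab
  have h₁₂ : q₁ ≠ q₂ := path₂.adj.ne
  have hleaf : (subdivide G a b q₂).neighborSet q₁ = {q₀} := by
    rw [neighborSet_subdivide_of_ne h₂a h₂b h₁₂ h₁a h₁b, h₁]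
    grind
  have hconn := connected_subdivide hG.connected h₂a h₂b h₂
  obtain ⟨S, y, hy⟩ := hG.exists_isBridgeSupersolution hab
  obtain ⟨q, hq⟩ := hD.exists_isDomSet_subdivide_twice h₁₂ h₁a h₁b h₂a h₂b hab.adj.ne
  exact (hG.specRad_le _ (connected_subdivide hconn h₁a h₁₂ hleaf) _ hq
    ((Finset.card_insert_le q D).trans hDγ)).not_gt
    ((hy.subdivide h₂a h₂b h₂).specRad_subdivide_lt hconn h₁a h₁₂ hleaf)

theorem not_dominatesOff_triple (hG : IsDominationMinimizer G γ) (hab : IsInternalEdge G a b)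
    (h₀₂ : q₀ ≠ q₂) (h₁₃ : q₁ ≠ q₃) (h₁ : G.neighborSet q₁ = {q₀, q₂})
    (h₂ : G.neighborSet q₂ = {q₁, q₃}) (h₃ : G.neighborSet q₃ = {q₂}) (hDγ : D.card < γ) :
    ¬ DominatesOff G {q₁, q₂, q₃} D := by
  intro hD
  have path₃ : StartsPendantPath G q₂ q₃ := .leaf h₃
  have path₂ : StartsPendantPath G q₁ q₂ := .step h₁₃ h₂ path₃
  have path₁ : StartsPendantPath G q₀ q₁ := .step h₀₂ h₁ path₂
  have h₁a := path₁.ne_left hab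
  have h₁b := path₁.ne_right hab
  have h₂a := path₂.ne_left hab
  have h₂b := path₂.ne_right hab
  have h₃a := path₃.ne_left hab
  have h₃b := path₃.ne_right hab
  have h₁₂ : q₁ ≠ q₂ := path₂.adj.ne
  have h₂₃ : q₂ ≠ q₃ := path₃.adj.ne
  have hleaf₂ : (subdivide G a b q₃).neighborSet q₂ = {q₁} := by
    rw [neighborSet_subdivide_of_ne h₃a h₃b h₂₃ h₂a h₂b, h₂]
    grind
  have hleaf₁ : (subdivide (subdivide G a b q₃) a q₃ q₂).neighborSet q₁ = {q₀} := by
    rw [neighborSet_subdivide_of_ne h₂a h₂₃ h₁₂ h₁a h₁₃,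
      neighborSet_subdivide_of_ne h₃a h₃b h₁₃ h₁a h₁b, h₁]
    have : q₀ ∈ G.neighborSet q₁ := h₁.ge (by simp)
    have : q₀ ≠ q₃ := by
      rintro rfl
      exact h₁₂ (h₃.le (G.adj_symm this))
    grind
  have hconn₃ := connected_subdivide hG.connected h₃a h₃b h₃
  have hconn₂ := connected_subdivide hconn₃ h₂a h₂₃ hleaf₂
  obtain ⟨S, y, hy⟩ := hG.exists_isBridgeSupersolution hab
  obtain ⟨q, hq⟩ := hD.exists_isDomSet_subdivide_thrice h₁₂ h₁₃ h₂₃ h₁a h₁b h₂a h₂b h₃a h₃b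
    hab.adj.ne
  exact (hG.specRad_le _ (connected_subdivide hconn₂ h₁a h₁₂ hleaf₁) _ hq
    ((Finset.card_insert_le q D).trans hDγ)).not_gt
    (((hy.subdivide h₃a h₃b h₃).subdivide h₂a h₂₃ hleaf₂).specRad_subdivide_lt hconn₂ h₁a h₁₂
      hleaf₁)

theorem le_card_of_isInternalEdge (hG : IsDominationMinimizer G γ) (hcard : 2 < Fintype.card V)
    (hab : IsInternalEdge G a b) (hD : IsDomSet G D) : γ ≤ D.card := by
  obtain ⟨D', hD', hD'D, hleaf⟩ := hD.exists_forall_mem_neighborSet_ne_singleton hG.connected hcard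
  have : Nontrivial V := ⟨a, b, hab.adj.ne⟩
  obtain ⟨z, s, hz⟩ := exists_neighborSet_eq_singleton hG.isTree
  by_contra! hDγ
  refine hG.not_dominatesOff_leaf hab hz (hD'D.trans_lt hDγ) fun v _ hvD ↦ ?_
  obtain ⟨d, hd, hdv⟩ := hD' v hvD
  exact ⟨d, hd, by
    rw [Finset.mem_singleton]
    rintro rfl
    exact hleaf d hd s hz, hdv⟩

theorem neighborSet_ne_singleton_of_pendant_triple (hG : IsDominationMinimizer G γ)
    (hcard : 2 < Fintype.card V) (hab : IsInternalEdge G a b) (h₀₂ : q₀ ≠ q₂) (h₁₃ : q₁ ≠ q₃)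
    (h₁ : G.neighborSet q₁ = {q₀, q₂}) (h₂ : G.neighborSet q₂ = {q₁, q₃}) :
    G.neighborSet q₃ ≠ {q₂} := by
  intro h₃
  obtain ⟨D₀, hD₀, hD₀γ⟩ := hG.exists_isDomSet
  obtain ⟨D, hD, hDD₀, hleaf⟩ :=
    hD₀.exists_forall_mem_neighborSet_ne_singleton hG.connected hcard
  have hDγ := hDD₀.trans hD₀γ
  have hq₃ : q₃ ∉ D := fun h ↦ hleaf _ h _ h₃
  have hq₂ : q₂ ∈ D := hD.mem_of_leaf h₃ hq₃
  have nbr₁ {v : V} (h : G.Adj q₁ v) : v = q₀ ∨ v = q₂ := h₁.le h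
  have nbr₂ {v : V} (h : G.Adj q₂ v) : v = q₁ ∨ v = q₃ := h₂.le h
  have hE := Finset.card_erase_lt_of_mem hq₂
  by_cases hq₁ : q₁ ∈ D
  · have hq₁' : q₁ ∈ D.erase q₂ :=
      Finset.mem_erase.2 ⟨(h₂.ge (by simp) : G.Adj q₂ q₁).ne', hq₁⟩
    refine hG.not_dominatesOff_triple (D := insert q₀ ((D.erase q₂).erase q₁)) hab h₀₂ h₁₃ h₁ h₂ h₃
      ?_ fun v hv hvD ↦ ?_
    · have := Finset.card_insert_le q₀ ((D.erase q₂).erase q₁)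
      have := Finset.card_erase_lt_of_mem hq₁'
      omega
    · obtain ⟨d, hd, hdv⟩ := hD v (by grind)
      exact ⟨d, by grind⟩
  · refine hG.not_dominatesOff_triple (D := D.erase q₂) hab h₀₂ h₁₃ h₁ h₂ h₃
      (hE.trans_le hDγ) fun v hv hvD ↦ ?_
    obtain ⟨d, hd, hdv⟩ := hD v (by grind)
    exact ⟨d, by grind⟩

theorem not_isRedundantEdge_of_startsPendantPath (hG : IsDominationMinimizer G γ)
    (hcard : 2 < Fintype.card V) (hab : IsInternalEdge G a b) (hD : IsDomSet G D)
    (hDγ : D.card ≤ γ) (hleaf : ∀ z ∈ D, ∀ s, G.neighborSet z ≠ {s})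
    (h : StartsPendantPath G w u) : ¬ IsRedundantEdge G D u w := by
  intro hred
  rcases h.leaf_or_pair_or_triple with hu | ⟨c, hwc, hu, hc⟩ |
    ⟨q₀, q₁, q₂, q₃, h₀₂, h₁₃, h₁, h₂, h₃⟩
  · obtain ⟨d, -, hdu, hne⟩ :=
      isDomSet_deleteEdges_iff.1 hred.isDomSet u fun h ↦ hleaf u h w hu
    obtain rfl : d = w := hu.le hdu.symm
    exact hne Sym2.eq_swap
  · have hcD : c ∉ D := fun h ↦ hleaf c h u hc
    exact hG.not_dominatesOff_pair hab hwc hu hc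
      ((Finset.card_erase_lt_of_mem (hD.mem_of_leaf hc hcD)).trans_le hDγ)
      (hred.dominatesOff_erase hu hcD)
  · exact hG.neighborSet_ne_singleton_of_pendant_triple hcard hab h₀₂ h₁₃ h₁ h₂ h₃

theorem exists_forall_not_isRedundantEdge_of_isInternalEdge (hG : IsDominationMinimizer G γ)
    (hcard : 2 < Fintype.card V) (hab : IsInternalEdge G a b) :
    ∃ D, IsDomSet G D ∧ D.card ≤ γ ∧ ∀ u w, ¬ IsRedundantEdge G D u w := by
  obtain ⟨D₀, hD₀, hD₀γ⟩ := hG.exists_isDomSet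
  obtain ⟨D, hD, hDD₀, hleaf⟩ :=
    hD₀.exists_forall_mem_neighborSet_ne_singleton hG.connected hcard
  have hDγ := hDD₀.trans hD₀γ
  refine ⟨D, hD, hDγ, fun u w hred ↦ ?_⟩
  have not_pendant {u w : V} (hred : IsRedundantEdge G D u w) : ¬ StartsPendantPath G w u :=
    fun h ↦ hG.not_isRedundantEdge_of_startsPendantPath hcard hab hD hDγ hleaf h hred
  have huw : IsInternalEdge G u w := ⟨hred.adj, not_pendant hred.symm, not_pendant hred⟩
  have : Nontrivial V := ⟨a, b, hab.adj.ne⟩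
  obtain ⟨z, s, hz⟩ := exists_neighborSet_eq_singleton hG.isTree
  exact hG.not_isDomSet_subdivide huw hz hDγ
    (hred.isDomSet_subdivide ((StartsPendantPath.leaf hz).ne_left huw)
      ((StartsPendantPath.leaf hz).ne_right huw) fun h ↦ hleaf z h s hz)

end IsDominationMinimizer
end InternalEdges

section EdgeRotation

variable {V : Type*} {G : SimpleGraph V} {a b c h z : V} {x : V → ℝ} {r : ℝ}

theorem adjMat_sup_edge [DecidableEq V] (hab : a ≠ b) (hadj : ¬ G.Adj a b) :
    adjMat (G ⊔ edge a b) = adjMat G + Matrix.single a b 1 + Matrix.single b a 1 := by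
  ext i j
  have := G.adj_symm (u := i) (v := j)
  simp only [adjMat, Matrix.of_apply, Matrix.add_apply, Matrix.single_apply, sup_adj, edge_adj]
  grind

variable [Fintype V]

theorem dotProduct_adjMat_sup_edge_mulVec (hab : a ≠ b) (hadj : ¬ G.Adj a b) (x : V → ℝ) :
    x ⬝ᵥ adjMat (G ⊔ edge a b) *ᵥ x = x ⬝ᵥ adjMat G *ᵥ x + 2 * (x a * x b) := by
  classical
  rw [adjMat_sup_edge hab hadj, Matrix.add_mulVec, Matrix.add_mulVec, dotProduct_add,
    dotProduct_add, Matrix.single_mulVec_eq, Matrix.single_mulVec_eq]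
  simp only [one_mul, dotProduct_smul, dotProduct_single_one, smul_eq_mul]
  ring

theorem lt_of_forall_ncard_neighborSet_le_two (hx : ∀ v, 0 < x v)
    (hxr : adjMat G *ᵥ x = r • x) (hr : 2 < r) (hdeg : ∀ v ≠ h, (G.neighborSet v).ncard ≤ 2)
    (hz : z ≠ h) : x z < x h := by
  by_contra! hle
  obtain ⟨m, hm, hmax⟩ := Set.exists_max_image {v | v ≠ h} x (Set.toFinite _) ⟨z, hz⟩
  have hmax' (v : V) : x v ≤ x m := by
    rcases eq_or_ne v h with rfl | hv
    exacts [hle.trans (hmax z hz), hmax v hv]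
  have hrm : r * x m ≤ 2 * x m :=
    calc r * x m = (adjMat G *ᵥ x) m := by simp [hxr]
      _ ≤ (G.neighborSet m).ncard * x m := adjMat_mulVec_le_ncard_mul fun v _ ↦ hmax' v
      _ ≤ 2 * x m := mul_le_mul_of_nonneg_right (by exact_mod_cast hdeg m hm) (hx m).le
  exact (mul_lt_mul_of_pos_right hr (hx m)).not_ge hrm

variable [DecidableEq V]

theorem specRad_sup_edge_lt (hac : a ≠ c) (hbc : b ≠ c) (hnac : ¬ G.Adj a c) (hnbc : ¬ G.Adj b c)
    (hx : ∀ v, 0 < x v)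
    (hxr : adjMat (G ⊔ edge a c) *ᵥ x = specRad (G ⊔ edge a c) • x) (hlt : x a < x b) :
    specRad (G ⊔ edge a c) < specRad (G ⊔ edge b c) := by
  have : Nonempty V := ⟨a⟩
  have hxx : 0 ≤ x ⬝ᵥ x := Finset.sum_nonneg fun v _ ↦ mul_self_nonneg (x v)
  refine lt_of_mul_lt_mul_right ?_ hxx
  calc specRad (G ⊔ edge a c) * (x ⬝ᵥ x) = x ⬝ᵥ adjMat (G ⊔ edge a c) *ᵥ x := by
        rw [hxr, dotProduct_smul, smul_eq_mul]
    _ = x ⬝ᵥ adjMat G *ᵥ x + 2 * (x a * x c) := dotProduct_adjMat_sup_edge_mulVec hac hnac x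
    _ < x ⬝ᵥ adjMat G *ᵥ x + 2 * (x b * x c) := by
        have := mul_lt_mul_of_pos_right hlt (hx c)
        linarith
    _ = x ⬝ᵥ adjMat (G ⊔ edge b c) *ᵥ x := (dotProduct_adjMat_sup_edge_mulVec hbc hnbc x).symm
    _ ≤ specRad (G ⊔ edge b c) * (x ⬝ᵥ x) := dotProduct_adjMat_mulVec_le _ x

-- The star `K₁,₄` has spectral radius exactly `2`, with eigenvector `x`.
theorem two_lt_specRad_of_four_le_ncard (hG : G.Connected) (hcard : 5 < Fintype.card V)
    (hh : 4 ≤ (G.neighborSet h).ncard) : 2 < specRad G := by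
  classical
  set x : V → ℝ := fun v ↦ if v = h then 2 else if G.Adj h v then 1 else 0 with hx
  have hxh : x h = 2 := if_pos rfl
  have hx_adj {v : V} (hv : G.Adj h v) : x v = 1 := by simp [hx, hv, hv.ne']
  have hx_far {v : V} (hv : v ≠ h) (hvh : ¬ G.Adj h v) : x v = 0 := by simp [hx, hv, hvh]
  have hx0 : 0 ≤ x := fun v ↦ by
    simp only [hx]
    split_ifs <;> norm_num
  have hsum : (adjMat G *ᵥ x) h = (G.neighborSet h).ncard := by
    rw [adjMat_mulVec_apply, Finset.sum_congr rfl fun v hv ↦ hx_adj (by simpa using hv),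
      Finset.sum_const, nsmul_one, Set.ncard_eq_toFinset_card _]
  refine lt_specRad_of_lt_mulVec hG hx0 (lt_of_le_of_ne (fun v ↦ ?_) fun heq ↦ ?_)
  · rcases eq_or_ne v h with rfl | hv
    · have : (4 : ℝ) ≤ (G.neighborSet v).ncard := by exact_mod_cast hh
      rw [hsum, Pi.smul_apply, hxh, smul_eq_mul]
      linarith
    by_cases hvh : G.Adj h v
    · simpa [hxh, hx_adj hvh] using le_adjMat_mulVec hx0 hvh.symm
    · rw [Pi.smul_apply, hx_far hv hvh, smul_zero, adjMat_mulVec_apply]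
      exact Finset.sum_nonneg fun u _ ↦ hx0 u
  · have hpos := pos_of_adjMat_mulVec_eq_smul hG hx0 (fun h0 ↦ by simp [h0] at hxh) heq.symm
    have huniv : insert h (G.neighborSet h) = Set.univ := Set.eq_univ_of_forall fun v ↦ by
      by_contra hv
      rw [Set.mem_insert_iff, not_or] at hv
      exact (hpos v).ne' (hx_far hv.1 hv.2)
    have hdeg : (G.neighborSet h).ncard = 4 := by
      have := congrFun heq h
      rw [hsum, Pi.smul_apply, hxh, smul_eq_mul] at this
      exact_mod_cast (by linarith : ((G.neighborSet h).ncard : ℝ) = 4)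
    have := Set.ncard_insert_le h (G.neighborSet h)
    rw [huniv, Set.ncard_univ, Nat.card_eq_fintype_card] at this
    omega

end EdgeRotation

section StarlikeTrees

variable {V : Type*} {G : SimpleGraph V} {D : Finset V} {γ : ℕ} {h p u v w z t : V}

theorem StartsPendantPath.ncard_neighborSet_le_two (huv : StartsPendantPath G u v) :
    (G.neighborSet v).ncard ≤ 2 := by
  rcases huv with hv | ⟨-, hv, -⟩
  · simp [hv]
  · simpa [hv] using Set.ncard_insert_le u {_}

theorem StartsPendantPath.of_adj (huv : StartsPendantPath G u v) (hvw : G.Adj v w) (hwu : w ≠ u) :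
    StartsPendantPath G v w := by
  rcases huv with hv | ⟨-, hv, hpath⟩
  · exact absurd (hv.le hvw) hwu
  · obtain rfl := (hv.le hvw : w = u ∨ _).resolve_left hwu
    exact hpath

theorem exists_adj_dist_add_one_eq (hG : G.Connected) (hv : v ≠ h) :
    ∃ w, G.Adj w v ∧ G.dist h w + 1 = G.dist h v := by
  obtain ⟨q, hq⟩ := hG.exists_walk_length_eq_dist v h
  cases q with
  | nil => exact absurd rfl hv
  | @cons _ w _ hvw q =>
    refine ⟨w, hvw.symm, ?_⟩
    have := dist_le q
    have := hG.dist_triangle (u := v) (v := w) (w := h)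
    rw [dist_eq_one_iff_adj.2 hvw] at this
    rw [Walk.length_cons] at hq
    rw [dist_comm, dist_comm (v := v)]
    omega

/-- Every edge of `G` lies on a pendant path and `h` has degree at least three. When `G` is
connected, this makes `G` a starlike tree with centre `h`. -/
structure IsStarlike (G : SimpleGraph V) (h : V) : Prop where
  three_le_ncard : 3 ≤ (G.neighborSet h).ncard
  not_isInternalEdge : ∀ a b, ¬ IsInternalEdge G a b

namespace IsStarlike

theorem startsPendantPath_or (hs : IsStarlike G h) (huv : G.Adj u v) :
    StartsPendantPath G u v ∨ StartsPendantPath G v u := by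
  by_contra! hno
  exact hs.not_isInternalEdge u v ⟨huv, hno.1, hno.2⟩

theorem ne_of_startsPendantPath (hs : IsStarlike G h) (huv : StartsPendantPath G u v) : v ≠ h := by
  rintro rfl
  have := hs.three_le_ncard.trans huv.ncard_neighborSet_le_two
  omega

theorem startsPendantPath (hs : IsStarlike G h) (hG : G.Connected) (huv : G.Adj u v)
    (hdist : G.dist h u + 1 = G.dist h v) : StartsPendantPath G u v := by
  induction hk : G.dist h u generalizing u v with
  | zero =>
    obtain rfl := hG.dist_eq_zero_iff.1 hk
    exact (hs.startsPendantPath_or huv).resolve_right fun hvu ↦ hs.ne_of_startsPendantPath hvu rfl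
  | succ k ih =>
    have huh : u ≠ h := by
      rintro rfl
      simp at hk
    obtain ⟨w, hwu, hw⟩ := exists_adj_dist_add_one_eq hG huh
    refine (ih hwu hw (by omega)).of_adj huv ?_
    rintro rfl
    omega

theorem ncard_neighborSet_le_two (hs : IsStarlike G h) (hG : G.Connected) (hv : v ≠ h) :
    (G.neighborSet v).ncard ≤ 2 := by
  obtain ⟨u, huv, hdist⟩ := exists_adj_dist_add_one_eq hG hv
  exact (hs.startsPendantPath hG huv hdist).ncard_neighborSet_le_two

theorem mem_of_isDomSet [Fintype V] (hs : IsStarlike G h) (hG : G.Connected) (hD : IsDomSet G D)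
    (hcard : 3 * D.card < Fintype.card V) : h ∈ D := by
  obtain ⟨u, hu, hdeg⟩ := hD.exists_three_le_ncard_neighborSet hcard
  by_contra hh
  have := hs.ncard_neighborSet_le_two hG (ne_of_mem_of_not_mem hu hh)
  omega

theorem exists_leaf_of_startsPendantPath (hs : IsStarlike G h) (hwu : StartsPendantPath G w u)
    (hne : s(w, u) ≠ s(h, v)) :
    ∃ z t, G.neighborSet z = {t} ∧ (G.deleteEdges {s(h, v)}).Reachable w z := by
  have hadj : (G.deleteEdges {s(h, v)}).Adj w u := deleteEdges_adj.2 ⟨hwu.adj, hne⟩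
  induction hwu with
  | leaf hu => exact ⟨_, _, hu, hadj.reachable⟩
  | @step w u x hwx hu hux ih =>
    have hne' : s(u, x) ≠ s(h, v) := fun heq ↦ by
      rcases Sym2.eq_iff.1 heq with ⟨rfl, -⟩ | ⟨-, rfl⟩
      exacts [hs.ne_of_startsPendantPath (.step hwx hu hux) rfl, hs.ne_of_startsPendantPath hux rfl]
    obtain ⟨z, t, hz, hreach⟩ := ih hne' (deleteEdges_adj.2 ⟨hux.adj, hne'⟩)
    exact ⟨z, t, hz, hadj.reachable.trans hreach⟩

theorem exists_leaf_reachable (hs : IsStarlike G h) (hv : G.Adj h v) :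
    ∃ z t, G.neighborSet z = {t} ∧ (G.deleteEdges {s(h, v)}).Reachable h z := by
  have hdeg := hs.three_le_ncard
  obtain ⟨u, hu, huv⟩ := Set.exists_ne_of_one_lt_ncard (by omega : 1 < (G.neighborSet h).ncard) v
  refine hs.exists_leaf_of_startsPendantPath
    ((hs.startsPendantPath_or hu).resolve_right fun huh ↦ hs.ne_of_startsPendantPath huh rfl) ?_
  simp [huv, hv.ne]

end IsStarlike

theorem connected_deleteEdges_sup_edge (hG : G.Connected) (hzv : z ≠ v)
    (hz : (G.deleteEdges {s(h, v)}).Reachable h z) :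
    (G.deleteEdges {s(h, v)} ⊔ edge z v).Connected := by
  have := hG.nonempty
  have hadj : (G.deleteEdges {s(h, v)} ⊔ edge z v).Adj z v := by simp [edge_adj, hzv]
  have hv := (hz.mono le_sup_left).trans hadj.reachable
  refine ⟨fun a b ↦ reachable_map (f := id) (fun a b hab ↦ ?_) (hG.preconnected a b)⟩
  by_cases hcut : s(a, b) = s(h, v)
  · rcases Sym2.eq_iff.1 hcut with ⟨rfl, rfl⟩ | ⟨rfl, rfl⟩
    exacts [hv, hv.symm]
  · exact Adj.reachable (.inl (deleteEdges_adj.2 ⟨hab, hcut⟩))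

theorem neighborSet_deleteEdges_left (G : SimpleGraph V) (u v : V) :
    (G.deleteEdges {s(u, v)}).neighborSet u = G.neighborSet u \ {v} := by
  ext w
  simp only [mem_neighborSet, deleteEdges_adj, Set.mem_singleton_iff, Set.mem_sdiff, Sym2.eq_iff]
  grind

theorem deleteEdges_sup_edge (huv : G.Adj u v) : G.deleteEdges {s(u, v)} ⊔ edge u v = G :=
  sdiff_sup_cancel ((edge_le_iff G).2 (.inr huv))

theorem IsStarlike.ncard_neighborSet_sup_edge_le_two [Finite V] (hs : IsStarlike G h)
    (hG : G.Connected) (hv : G.Adj h v) (hz : G.neighborSet z = {t}) (hw : w ≠ h) :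
    ((G.deleteEdges {s(h, v)} ⊔ edge z v).neighborSet w).ncard ≤ 2 := by
  have hzh : z ≠ h := hs.ne_of_startsPendantPath (.leaf hz)
  have hwdeg := hs.ncard_neighborSet_le_two hG hw
  rcases eq_or_ne w v with rfl | hwv
  · have hhw : h ∈ G.neighborSet w := hv.symm
    have hsub : (G.deleteEdges {s(h, w)} ⊔ edge z w).neighborSet w ⊆
        insert z (G.neighborSet w \ {h}) := fun u hu ↦ by
      simp only [mem_neighborSet, sup_adj, deleteEdges_adj, edge_adj, Set.mem_singleton_iff,
        Sym2.eq_iff, Set.mem_insert_iff, Set.mem_sdiff] at hu ⊢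
      grind
    have := Set.ncard_le_ncard hsub
    have := Set.ncard_insert_le z (G.neighborSet w \ {h})
    have := Set.ncard_sdiff_singleton_add_one hhw
    omega
  rcases eq_or_ne w z with rfl | hwz
  · have hsub : (G.deleteEdges {s(h, v)} ⊔ edge w v).neighborSet w ⊆ {v, t} := fun u hu ↦ by
      have : G.Adj w u → u = t := fun hwu ↦ hz.le hwu
      simp only [mem_neighborSet, sup_adj, deleteEdges_adj, edge_adj, Set.mem_insert_iff,
        Set.mem_singleton_iff] at hu ⊢
      grind
    exact (Set.ncard_le_ncard hsub).trans (by simpa using Set.ncard_insert_le v {t})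
  · refine (Set.ncard_le_ncard fun u hu ↦ ?_).trans hwdeg
    simp only [mem_neighborSet, sup_adj, deleteEdges_adj, edge_adj] at hu ⊢
    grind

variable [Fintype V]

theorem IsStarlike.four_le_ncard_of_isDomSet_deleteEdges (hs : IsStarlike G h) (hG : G.Connected)
    (hv : G.Adj h v) (hD : IsDomSet (G.deleteEdges {s(h, v)}) D)
    (hcard : 3 * D.card < Fintype.card V) : 4 ≤ (G.neighborSet h).ncard := by
  obtain ⟨u, -, hu⟩ := hD.exists_three_le_ncard_neighborSet hcard
  have hsub : (G.deleteEdges {s(h, v)}).neighborSet u ⊆ G.neighborSet u := fun w hw ↦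
    deleteEdges_le _ hw
  obtain rfl : u = h := by
    by_contra huh
    have := hs.ncard_neighborSet_le_two hG huh
    have := Set.ncard_le_ncard hsub
    omega
  have hvu : v ∈ G.neighborSet u := hv
  rw [neighborSet_deleteEdges_left] at hu
  have := Set.ncard_sdiff_singleton_add_one hvu
  omega

theorem specRad_deleteEdges_sup_edge_lt [DecidableEq V] (hs : IsStarlike G h) (hG : G.Connected)
    (hv : G.Adj h v) (hbridge : ¬ (G.deleteEdges {s(h, v)}).Reachable h v)
    (hz : G.neighborSet z = {t})
    (hreach : (G.deleteEdges {s(h, v)}).Reachable h z)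
    (htwo : 2 < specRad (G.deleteEdges {s(h, v)} ⊔ edge z v)) :
    specRad (G.deleteEdges {s(h, v)} ⊔ edge z v) < specRad G := by
  set K := G.deleteEdges {s(h, v)}
  have hzv : z ≠ v := fun hzv ↦ hbridge (hzv ▸ hreach)
  obtain ⟨x, hx, hxH⟩ := exists_perron_vector
    (connected_deleteEdges_sup_edge hG hzv hreach)
  have hlt : x z < x h := lt_of_forall_ncard_neighborSet_le_two hx hxH htwo
    (fun w hw ↦ hs.ncard_neighborSet_sup_edge_le_two hG hv hz hw)
    (hs.ne_of_startsPendantPath (.leaf hz))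
  have := specRad_sup_edge_lt hzv hv.ne (fun hzv ↦ hbridge (hreach.trans hzv.reachable))
    (fun hhv ↦ hbridge hhv.reachable) hx hxH hlt
  rwa [deleteEdges_sup_edge hv] at this

namespace IsDominationMinimizer

variable [DecidableEq V]

theorem not_isDomSet_deleteEdges_of_isStarlike (hG : IsDominationMinimizer G γ) (hγ : 2 ≤ γ)
    (hcard : 3 * γ < Fintype.card V) (hs : IsStarlike G h) (hv : G.Adj h v) (hDγ : D.card ≤ γ) :
    ¬ IsDomSet (G.deleteEdges {s(h, v)}) D := by
  intro hD
  have hbridge := isBridge_iff.1 (isAcyclic_iff_forall_adj_isBridge.1 hG.isTree.isAcyclic hv)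
  obtain ⟨z, t, hz, hreach⟩ := hs.exists_leaf_reachable hv
  have hzv : z ≠ v := fun hzv ↦ hbridge (hzv ▸ hreach)
  have hle := hG.specRad_le _ (connected_deleteEdges_sup_edge hG.connected hzv hreach) D
    (hD.mono le_sup_left) hDγ
  have htwo := two_lt_specRad_of_four_le_ncard hG.connected (by omega)
    (hs.four_le_ncard_of_isDomSet_deleteEdges hG.connected hv hD (by omega))
  exact hle.not_gt
    (specRad_deleteEdges_sup_edge_lt hs hG.connected hv hbridge hz hreach (htwo.trans_le hle))

theorem le_card_of_isStarlike (hG : IsDominationMinimizer G γ) (hγ : 2 ≤ γ)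
    (hcard : 3 * γ < Fintype.card V) (hs : IsStarlike G h) (hD : IsDomSet G D) : γ ≤ D.card := by
  by_contra! hDγ
  have hh : h ∈ D := hs.mem_of_isDomSet hG.connected hD (by omega)
  obtain ⟨v, hv⟩ : (G.neighborSet h).Nonempty :=
    Set.nonempty_of_ncard_ne_zero (by have := hs.three_le_ncard; omega)
  have hins : IsDomSet G (insert v D) := fun w hw ↦ by
    obtain ⟨d, hd, hdw⟩ := hD w (by grind)
    exact ⟨d, Finset.mem_insert_of_mem hd, hdw⟩
  exact hG.not_isDomSet_deleteEdges_of_isStarlike hγ hcard hs hv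
    ((Finset.card_insert_le v D).trans hDγ)
    (hins.deleteEdges_of_mem_iff_mem (by simp [hh]))

end IsDominationMinimizer
end StarlikeTrees

section RedundantEdges

variable {V : Type*} {G : SimpleGraph V} {D : Finset V} {γ : ℕ} {h p u v w : V}

theorem IsRedundantEdge.isDomSet_insert_erase [DecidableEq V] (hred : IsRedundantEdge G D u w)
    (hu : G.neighborSet u = {w, p}) : IsDomSet G (insert p (D.erase u)) := by
  intro v hv
  obtain ⟨hvp, hvD⟩ : v ≠ p ∧ (v = u ∨ v ∉ D) := by
    simpa [or_iff_not_imp_left] using hv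
  rcases eq_or_ne v u with rfl | hvu
  · exact ⟨p, Finset.mem_insert_self _ _, (hu.ge (by simp) : G.Adj v p).symm⟩
  · obtain ⟨d, hd, hdu, hdv⟩ := hred.exists_adj_of_notMem hu (hvD.resolve_left hvu) hvp
    exact ⟨d, by simp [hd, hdu], hdv⟩

theorem IsRedundantEdge.of_notMem (hred : IsRedundantEdge G D u w)
    (hu : G.neighborSet u = {w, p}) (hwp : w ≠ p) (huD : u ∉ D) : IsRedundantEdge G D p u := by
  have hp : G.Adj p u := G.adj_symm (hu.ge (by simp))
  have hpD : p ∈ D := by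
    obtain ⟨d, hd, hdu, hne⟩ := isDomSet_deleteEdges_iff.1 hred.isDomSet u huD
    rcases hu.le hdu.symm with rfl | rfl
    exacts [absurd Sym2.eq_swap hne, hd]
  exact ⟨hp, .inl hpD, (hred.isDomSet.mono (deleteEdges_le _)).deleteEdges_of_adj hpD
    (hred.mem_or_mem.resolve_left huD) hwp hred.adj.symm⟩

variable [Fintype V] [DecidableEq V]

namespace IsDominationMinimizer

theorem not_isRedundantEdge_of_dist_add_one_eq (hG : IsDominationMinimizer G γ) (hγ : 2 ≤ γ)
    (hcard : 3 * γ < Fintype.card V) (hs : IsStarlike G h) (hDγ : D.card ≤ γ)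
    (hmin : ∀ D', IsDomSet G D' → D'.card ≤ γ → ∑ v ∈ D, G.dist h v ≤ ∑ v ∈ D', G.dist h v)
    (hdist : G.dist h u + 1 = G.dist h w) : ¬ IsRedundantEdge G D u w := by
  intro hred
  induction hk : G.dist h u generalizing u w with
  | zero =>
    obtain rfl := hG.connected.dist_eq_zero_iff.1 hk
    exact hG.not_isDomSet_deleteEdges_of_isStarlike hγ hcard hs hred.adj hDγ hred.isDomSet
  | succ k ih =>
    obtain ⟨p, hpu, hp⟩ := exists_adj_dist_add_one_eq (h := h) hG.connected (v := u) (by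
      rintro rfl
      simp at hk)
    have hwp : w ≠ p := by
      rintro rfl
      omega
    have hu : G.neighborSet u = {w, p} := by
      rcases hs.startsPendantPath hG.connected hpu hp with hu | ⟨-, hu, -⟩
      · exact absurd (hu.le hred.adj) hwp
      · obtain rfl := (hu.le hred.adj : w = p ∨ w = _).resolve_left hwp
        rw [hu, Set.pair_comm]
    by_cases huD : u ∈ D
    · have hcardD := Finset.card_erase_add_one huD
      have hinsert := hred.isDomSet_insert_erase hu
      by_cases hpD : p ∈ D.erase u
      · rw [Finset.insert_eq_of_mem hpD] at hinsert
        have := hG.le_card_of_isStarlike hγ hcard hs hinsert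
        omega
      · have hle := hmin _ hinsert (by rw [Finset.card_insert_of_notMem hpD]; omega)
        rw [Finset.sum_insert hpD, ← Finset.sum_erase_add D _ huD] at hle
        omega
    · exact ih hp (hred.of_notMem hu hwp huD) (by omega)

theorem exists_forall_not_isRedundantEdge_of_isStarlike (hG : IsDominationMinimizer G γ)
    (hγ : 2 ≤ γ) (hcard : 3 * γ < Fintype.card V) (hs : IsStarlike G h) :
    ∃ D, IsDomSet G D ∧ D.card ≤ γ ∧ ∀ u w, ¬ IsRedundantEdge G D u w := by
  obtain ⟨D, ⟨hD, hDγ⟩, hmin⟩ := Set.exists_min_image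
    {D : Finset V | IsDomSet G D ∧ D.card ≤ γ} (fun D ↦ ∑ v ∈ D, G.dist h v) (Set.toFinite _)
    hG.exists_isDomSet
  have not_redundant {u w : V} (hdist : G.dist h u + 1 = G.dist h w) : ¬ IsRedundantEdge G D u w :=
    hG.not_isRedundantEdge_of_dist_add_one_eq hγ hcard hs hDγ
      (fun D' hD' hD'γ ↦ hmin D' ⟨hD', hD'γ⟩) hdist
  refine ⟨D, hD, hDγ, fun u w hred ↦ ?_⟩
  rcases hG.isTree.dist_eq_dist_add_one_of_adj h hred.adj with hdist | hdist
  exacts [not_redundant hdist.symm hred.symm, not_redundant hdist.symm hred]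

theorem isStarlike_or_isInternalEdge (hG : IsDominationMinimizer G γ)
    (hcard : 3 * γ < Fintype.card V) : (∃ h, IsStarlike G h) ∨ ∃ a b, IsInternalEdge G a b := by
  obtain ⟨D, hD, hDγ⟩ := hG.exists_isDomSet
  obtain ⟨h, -, hh⟩ := hD.exists_three_le_ncard_neighborSet (by omega)
  by_cases hab : ∃ a b, IsInternalEdge G a b
  · exact .inr hab
  · push Not at hab
    exact .inl ⟨h, hh, hab⟩

theorem le_card (hG : IsDominationMinimizer G γ) (hγ : 2 ≤ γ) (hcard : 3 * γ < Fintype.card V)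
    (hD : IsDomSet G D) : γ ≤ D.card := by
  rcases hG.isStarlike_or_isInternalEdge hcard with ⟨h, hs⟩ | ⟨a, b, hab⟩
  exacts [hG.le_card_of_isStarlike hγ hcard hs hD, hG.le_card_of_isInternalEdge (by omega) hab hD]

theorem exists_forall_not_isRedundantEdge (hG : IsDominationMinimizer G γ) (hγ : 2 ≤ γ)
    (hcard : 3 * γ < Fintype.card V) :
    ∃ D, IsDomSet G D ∧ D.card ≤ γ ∧ ∀ u w, ¬ IsRedundantEdge G D u w := by
  rcases hG.isStarlike_or_isInternalEdge hcard with ⟨h, hs⟩ | ⟨a, b, hab⟩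
  exacts [hG.exists_forall_not_isRedundantEdge_of_isStarlike hγ hcard hs,
    hG.exists_forall_not_isRedundantEdge_of_isInternalEdge (by omega) hab]

theorem domNum_eq (hG : IsDominationMinimizer G γ) (hγ : 2 ≤ γ) (hcard : 3 * γ < Fintype.card V) :
    domNum G = γ := by
  obtain ⟨D, hD, hDγ⟩ := hG.exists_isDomSet
  obtain ⟨D', hD', hD'G⟩ := exists_isDomSet_card_eq_domNum G
  exact (hD.domNum_le.trans hDγ).antisymm (hD'G ▸ hG.le_card hγ hcard hD')

theorem of_domNum_eq (hγ : 2 ≤ γ) (hcard : 3 * γ < Fintype.card V) (hconn : G.Connected)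
    (hdom : domNum G = γ)
    (hmin : ∀ H : SimpleGraph V, H.Connected → domNum H = γ → specRad G ≤ specRad H) :
    IsDominationMinimizer G γ := by
  obtain ⟨D, hD, hDG⟩ := exists_isDomSet_card_eq_domNum G
  have hDγ : D.card ≤ γ := (hDG.trans hdom).le
  obtain ⟨K, ⟨hK, hDK⟩, hKmin⟩ := Set.exists_min_image
    {H : SimpleGraph V | H.Connected ∧ ∃ D : Finset V, IsDomSet H D ∧ D.card ≤ γ} specRad
    (Set.toFinite _) ⟨G, hconn, D, hD, hDγ⟩
  have hKγ : IsDominationMinimizer K γ :=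
    ⟨hK, hDK, fun H hH D hD hDγ ↦ hKmin H ⟨hH, D, hD, hDγ⟩⟩
  exact ⟨hconn, ⟨D, hD, hDγ⟩, fun H hH D hD hDγ ↦
    (hmin K hK (hKγ.domNum_eq hγ hcard)).trans (hKγ.specRad_le H hH D hD hDγ)⟩

end IsDominationMinimizer
end RedundantEdges

section Distances

variable {V : Type*} {G : SimpleGraph V} {D : Finset V} {u v : V}

theorem IsDomSet.three_le_dist (hD : IsDomSet G D) (hG : G.Connected)
    (hred : ∀ u w, ¬ IsRedundantEdge G D u w) (hu : u ∈ D) (hv : v ∈ D) (huv : u ≠ v) :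
    3 ≤ G.dist u v := by
  have hnadj : ¬ G.Adj u v := fun hadj ↦
    hred u v ⟨hadj, .inl hu, hD.deleteEdges_of_mem_iff_mem (iff_of_true hu hv)⟩
  by_contra! hlt
  have hpos := hG.pos_dist_of_ne huv
  have hne : G.dist u v ≠ 1 := fun hdist ↦ hnadj (dist_eq_one_iff_adj.1 hdist)
  obtain ⟨w, hwv, hw⟩ := exists_adj_dist_add_one_eq (h := u) hG huv.symm
  have huw : G.Adj u w := dist_eq_one_iff_adj.1 (by omega)
  exact hred u w ⟨huw, .inl hu, hD.deleteEdges_of_adj hu hv huv.symm hwv.symm⟩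

theorem exists_dist_eq_of_le {k : ℕ} (hG : G.Connected) (hk : k ≤ G.dist u v) :
    ∃ w, G.dist u w = k := by
  obtain ⟨q, hq⟩ := hG.exists_walk_length_eq_dist u v
  refine ⟨q.getVert k, ?_⟩
  rw [← length_eq_dist_of_subwalk hq (q.isSubwalk_take k), Walk.take_length, hq, min_eq_left hk]

theorem IsDomSet.exists_dist_eq_three (hD : IsDomSet G D) (hG : G.Connected) (hcard : 1 < D.card)
    (hfar : ∀ u ∈ D, ∀ v ∈ D, u ≠ v → 3 ≤ G.dist u v) :
    ∃ u ∈ D, ∃ v ∈ D, u ≠ v ∧ G.dist u v = 3 := by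
  obtain ⟨u, hu, v, hv, huv⟩ := Finset.one_lt_card.1 hcard
  obtain ⟨w, hw⟩ := exists_dist_eq_of_le hG (le_of_lt (hfar u hu v hv huv))
  have hwD : w ∉ D := fun hwD ↦ by
    have := hfar u hu w hwD (by rintro rfl; simp at hw)
    omega
  obtain ⟨d, hd, hdw⟩ := hD w hwD
  have hdist : G.dist w d = 1 := dist_eq_one_iff_adj.2 hdw.symm
  have hud : u ≠ d := by
    rintro rfl
    rw [dist_comm] at hdist
    omega
  have := hfar u hu d hd hud
  have := hG.dist_triangle (u := u) (v := w) (w := d)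
  exact ⟨u, hu, d, hd, hud, by omega⟩

end Distances

theorem minimizer_min_distance_eq_three_general {V : Type*} [Fintype V] [DecidableEq V] {γ : ℕ}
    (hγ : 2 ≤ γ) (hcard : 3 * γ < Fintype.card V) {G : SimpleGraph V} (hconn : G.Connected)
    (hdom : domNum G = γ)
    (hmin : ∀ H : SimpleGraph V, H.Connected → domNum H = γ → specRad G ≤ specRad H) :
    ∃ D : Finset V, IsDomSet G D ∧ D.card = γ ∧
      (∃ u ∈ D, ∃ v ∈ D, u ≠ v ∧ G.dist u v = 3) ∧
      (∀ u ∈ D, ∀ v ∈ D, u ≠ v → 3 ≤ G.dist u v) := by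
  have hG := IsDominationMinimizer.of_domNum_eq hγ hcard hconn hdom hmin
  obtain ⟨D, hD, hDγ, hred⟩ := hG.exists_forall_not_isRedundantEdge hγ hcard
  have hDcard : D.card = γ := hDγ.antisymm (hG.le_card hγ hcard hD)
  have hfar : ∀ u ∈ D, ∀ v ∈ D, u ≠ v → 3 ≤ G.dist u v := fun u hu v hv huv ↦
    hD.three_le_dist hconn hred hu hv huv
  exact ⟨D, hD, hDcard, hD.exists_dist_eq_three hconn (by omega) hfar, hfar⟩

theorem minimizer_min_distance_eq_three (n γ : ℕ) (hγ1 : 2 ≤ γ) (hγ2 : γ < (n + 2) / 3)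
    (G : SimpleGraph (Fin n)) (hconn : G.Connected) (hdom : domNum G = γ)
    (hmin : ∀ H : SimpleGraph (Fin n), H.Connected → domNum H = γ →
      specRad G ≤ specRad H) :
    ∃ D : Finset (Fin n), IsDomSet G D ∧ D.card = γ ∧
      (∃ u ∈ D, ∃ v ∈ D, u ≠ v ∧ G.dist u v = 3) ∧
      (∀ u ∈ D, ∀ v ∈ D, u ≠ v → 3 ≤ G.dist u v) :=
  minimizer_min_distance_eq_three_general hγ1 (by rw [Fintype.card_fin]; omega) hconn hdom hmin
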